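/- arXiv:2310.12136 — 6 statements merged into one kernel-verified Lean document; each statement's English description precedes it below -/
import Mathlib

section
/- Let ζ be a non-primitive binary substitution of constant length q ≥ 2. Then for every y ∈ X_ζ, every m, ℓ ∈ ℕ and every ε > 0, the limits as n → ∞ of the correlation sum C_ℓ(y^{(m)}, n, ε), of the recurrence rate RR_ℓ(y^{(m)}, n, ε) and of the determinism DET_ℓ(y^{(m)}, n, ε) exist and are all equal to 1, and the average line length L_ℓ(y^{(m)}, n, ε) tends to ∞ as n → ∞. -/
open Filter Topology MeasureTheory

namespace RQA

/-- The standard metric on symbolic sequences over an alphabet `α`: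
`ρ(x,y) = 2^{-min{i : x i ≠ y i}}` for `x ≠ y` and `ρ(x,x) = 0`. -/
noncomputable def seqDist {α : Type*} (x y : ℕ → α) : ℝ :=
  haveI := Classical.propDecidable (x = y)
  if x = y then 0 else (2 : ℝ) ^ (-((sInf {i : ℕ | x i ≠ y i} : ℕ) : ℤ))

/-- The (one-sided) shift on sequences. -/
def shift {α : Type*} (x : ℕ → α) : ℕ → α := fun i => x (i + 1)

/-- The embedded sequence `x^{(m)}`, a sequence over the alphabet `α^m`. -/
def embedSeq {α : Type*} (m : ℕ) (x : ℕ → α) : ℕ → (Fin m → α) :=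
  fun j t => x (j + (t : ℕ))

section RQAdefs

variable {X : Type*} (d : X → X → ℝ) (f : X → X) (x : X)

/-- The entry of the recurrence plot at `(i,j)` equals `1`. -/
def RPone (ε : ℝ) (i j : ℕ) : Prop := d (f^[i] x) (f^[j] x) ≤ ε

/-- `(i, j, l)` is a diagonal line in the recurrence plot `RP(x, n, ε)`. -/
def IsLine (n : ℕ) (ε : ℝ) (i j l : ℕ) : Prop :=
  1 ≤ l ∧ i + l ≤ n ∧ j + l ≤ n ∧ i ≠ j ∧
  (∀ h, h < l → RPone d f x ε (i + h) (j + h)) ∧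
  (0 < i → 0 < j → ¬ RPone d f x ε (i - 1) (j - 1)) ∧
  (max i j + l < n → ¬ RPone d f x ε (i + l) (j + l))

/-- `N_l(x, n, ε)`: the number of diagonal lines of length exactly `l`. -/
noncomputable def Nlines (n : ℕ) (ε : ℝ) (l : ℕ) : ℕ :=
  Set.ncard {p : ℕ × ℕ | IsLine d f x n ε p.1 p.2 l}

/-- `P_l(x, n, ε) = N_l/(n² − n)`. -/
noncomputable def Pline (n : ℕ) (ε : ℝ) (l : ℕ) : ℝ :=
  (Nlines d f x n ε l : ℝ) / ((n : ℝ) ^ 2 - (n : ℝ))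

/-- `P≥_ℓ(x, n, ε) = Σ_{l ≥ ℓ} P_l`. -/
noncomputable def PlineGe (n : ℕ) (ε : ℝ) (ℓ : ℕ) : ℝ :=
  ∑' k : ℕ, Pline d f x n ε (ℓ + k)

/-- The recurrence rate `RR_ℓ(x, n, ε) = Σ_{l ≥ ℓ} l · P_l`. -/
noncomputable def RRate (n : ℕ) (ε : ℝ) (ℓ : ℕ) : ℝ :=
  ∑' k : ℕ, ((ℓ + k : ℕ) : ℝ) * Pline d f x n ε (ℓ + k)

/-- The determinism `DET_ℓ(x, n, ε) = RR_ℓ/RR_1`. -/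
noncomputable def DETrm (n : ℕ) (ε : ℝ) (ℓ : ℕ) : ℝ :=
  RRate d f x n ε ℓ / RRate d f x n ε 1

/-- The average line length `L_ℓ(x, n, ε) = RR_ℓ/P≥_ℓ`. -/
noncomputable def LAvg (n : ℕ) (ε : ℝ) (ℓ : ℕ) : ℝ :=
  RRate d f x n ε ℓ / PlineGe d f x n ε ℓ

/-- The entropy of line lengths
`ENT_ℓ(x, n, ε) = log P≥_ℓ − (1/P≥_ℓ)·Σ_{l≥ℓ} P_l · log P_l` (with `0·log 0 = 0`). -/
noncomputable def ENTln (n : ℕ) (ε : ℝ) (ℓ : ℕ) : ℝ :=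
  Real.log (PlineGe d f x n ε ℓ) -
    (PlineGe d f x n ε ℓ)⁻¹ *
      ∑' k : ℕ, Pline d f x n ε (ℓ + k) * Real.log (Pline d f x n ε (ℓ + k))

/-- The correlation sum
`C_ℓ(x, n, ε) = n^{-2}·#{(i,j) ∈ [0,n)² : d_ℓ(f^i x, f^j x) ≤ ε}`,
where `d_ℓ` is the Bowen metric. -/
noncomputable def corrSum (ℓ n : ℕ) (ε : ℝ) : ℝ :=
  (Set.ncard {p : ℕ × ℕ | p.1 < n ∧ p.2 < n ∧
      ∀ k, k < ℓ → d (f^[p.1 + k] x) (f^[p.2 + k] x) ≤ ε} : ℝ) / (n : ℝ) ^ 2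

end RQAdefs

/-- The extension of a substitution to a morphism of the free monoid of finite words. -/
def substWord (ζ : Bool → List Bool) : List Bool → List Bool :=
  fun w => w.foldr (fun a r => ζ a ++ r) []

/-- `ζ` is a (binary) substitution of constant length `q ≥ 2`. -/
def IsConstLenSubst (ζ : Bool → List Bool) (q : ℕ) : Prop :=
  2 ≤ q ∧ ∀ a : Bool, (ζ a).length = q

/-- The language `L_ζ`: subwords of the words `ζ^k(a)`, `a ∈ A`, `k ≥ 1`. -/
def substLang (ζ : Bool → List Bool) : Set (List Bool) :=
  {w | ∃ a : Bool, ∃ k : ℕ, 1 ≤ k ∧ w <:+: (substWord ζ)^[k] [a]}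

/-- The substitution subshift `X_ζ`. -/
def SubstShift (ζ : Bool → List Bool) : Set (ℕ → Bool) :=
  {y | ∀ n : ℕ, (List.ofFn fun t : Fin n => y (t : ℕ)) ∈ substLang ζ}

/-- `ζ` is primitive. -/
def IsPrimitive (ζ : Bool → List Bool) : Prop :=
  ∃ k : ℕ, 1 ≤ k ∧ ∀ a b : Bool, b ∈ (substWord ζ)^[k] [a]

/-- `ζ` is aperiodic: `X_ζ` contains a non-periodic sequence. -/
def IsAperiodic (ζ : Bool → List Bool) : Prop :=
  ∃ y ∈ SubstShift ζ, ∀ p : ℕ, 1 ≤ p → ∃ i : ℕ, y (i + p) ≠ y i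

/-- The action of a constant length-`q` substitution on infinite sequences. -/
def substSeq (ζ : Bool → List Bool) (q : ℕ) (x : ℕ → Bool) : ℕ → Bool :=
  fun i => (ζ (x (i / q))).getD (i % q) false

/-- `(i, j, l)` is a line in the infinite symbolic recurrence plot `RP(x, ∞, ε₀)`. -/
def IsInfLine (x : ℕ → Bool) (i j l : ℕ) : Prop :=
  1 ≤ l ∧ i ≠ j ∧ (∀ h, h < l → x (i + h) = x (j + h)) ∧
  (0 < i → 0 < j → x (i - 1) ≠ x (j - 1)) ∧ x (i + l) ≠ x (j + l)

/-- `K_l`: the set of starting points `(i,j)`, `i,j ≥ 1`, of inner lines of length `l`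
in the infinite symbolic recurrence plot. -/
def Kset (x : ℕ → Bool) (l : ℕ) : Set (ℕ × ℕ) :=
  {p | 1 ≤ p.1 ∧ 1 ≤ p.2 ∧ IsInfLine x p.1 p.2 l}

/-- `#(M ∩ [0,n)²)/n²`. -/
noncomputable def densCount (M : Set (ℕ × ℕ)) (n : ℕ) : ℝ :=
  (Set.ncard (M ∩ {p : ℕ × ℕ | p.1 < n ∧ p.2 < n}) : ℝ) / (n : ℝ) ^ 2

/-- `M ⊆ ℕ²` has asymptotic density `a`. -/
def HasDens (M : Set (ℕ × ℕ)) (a : ℝ) : Prop :=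
  Tendsto (densCount M) atTop (𝓝 a)

/-- `δ_l(n) = #(K_l ∩ [1,n)²)/(n² − n)`. -/
noncomputable def deltaK (x : ℕ → Bool) (l n : ℕ) : ℝ :=
  (Set.ncard (Kset x l ∩ {p : ℕ × ℕ | p.1 < n ∧ p.2 < n}) : ℝ) / ((n : ℝ) ^ 2 - (n : ℝ))

/-- `M` is a minimal subset of the subshift `Y`. -/
def IsMinimalSubset (Y M : Set (ℕ → Bool)) : Prop :=
  M ⊆ Y ∧ M.Nonempty ∧ IsClosed M ∧ (∀ z ∈ M, shift z ∈ M) ∧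
  ∀ M' : Set (ℕ → Bool), M' ⊆ M → M'.Nonempty → IsClosed M' →
    (∀ z ∈ M', shift z ∈ M') → M' = M

end RQA

open RQA

namespace NP
open Finset
section lines
variable {X : Type*} (d : X → X → ℝ) (f : X → X) (x : X)

open Classical in
/-- all lines -/
noncomputable def T (n : ℕ) (ε : ℝ) : Finset ((ℕ × ℕ) × ℕ) :=
  ((range n ×ˢ range n) ×ˢ range (n+1)).filter (fun t => IsLine d f x n ε t.1.1 t.1.2 t.2)

open Classical in
/-- zeros -/
noncomputable def Zs (n : ℕ) (ε : ℝ) : Finset (ℕ × ℕ) :=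
  (range n ×ˢ range n).filter (fun p => ¬ RPone d f x ε p.1 p.2)

open Classical in
/-- off-diagonal ones -/
noncomputable def Os (n : ℕ) (ε : ℝ) : Finset (ℕ × ℕ) :=
  (range n ×ˢ range n).filter (fun p => p.1 ≠ p.2 ∧ RPone d f x ε p.1 p.2)

theorem mem_T {n : ℕ} {ε : ℝ} {i j l : ℕ} :
    ((i,j),l) ∈ T d f x n ε ↔ IsLine d f x n ε i j l := by
  simp only [T, mem_filter, mem_product, mem_range, and_iff_right_iff_imp]
  rintro ⟨h1, h2, h3, -⟩
  omega

theorem len_unique {n : ℕ} {ε : ℝ} {i j l l' : ℕ} (h : IsLine d f x n ε i j l)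
    (h' : IsLine d f x n ε i j l') : l = l' := by
  obtain ⟨a1, a2, a3, a4, a5, a6, a7⟩ := h
  obtain ⟨b1, b2, b3, b4, b5, b6, b7⟩ := h'
  rcases lt_trichotomy l l' with hl | hl | hl
  · exact absurd (b5 l hl) (a7 (by omega))
  · exact hl
  · exact absurd (a5 l' hl) (b7 (by omega))

theorem start_le {n : ℕ} {ε : ℝ} {i j l i' j' l' h h' : ℕ} (H : IsLine d f x n ε i j l)
    (H' : IsLine d f x n ε i' j' l') (hh : h < l)
    (e1 : i + h = i' + h') (e2 : j + h = j' + h') : h ≤ h' := by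
  by_contra hc
  push Not at hc
  obtain ⟨a1, a2, a3, a4, a5, a6, a7⟩ := H
  obtain ⟨b1, b2, b3, b4, b5, b6, b7⟩ := H'
  have := a5 (h - h' - 1) (by omega)
  rw [show i + (h - h' - 1) = i' - 1 by omega, show j + (h - h' - 1) = j' - 1 by omega] at this
  exact b6 (by omega) (by omega) this

theorem exists_start (ε : ℝ) : ∀ i j : ℕ, RPone d f x ε i j → ∃ i0 j0 s, i = i0 + s ∧ j = j0 + s ∧
    (∀ h, h ≤ s → RPone d f x ε (i0 + h) (j0 + h)) ∧
    (0 < i0 → 0 < j0 → ¬ RPone d f x ε (i0 - 1) (j0 - 1)) := by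
  intro i
  induction i with
  | zero =>
    intro j hj
    exact ⟨0, j, 0, rfl, rfl, by intro h hh; obtain rfl : h = 0 := by omega
                                 simpa using hj, by omega⟩
  | succ i ih =>
    intro j hj
    by_cases hc : 0 < j ∧ RPone d f x ε i (j-1)
    · obtain ⟨i0, j0, s, h1, h2, h3, h4⟩ := ih (j-1) hc.2
      refine ⟨i0, j0, s+1, by omega, by omega, ?_, h4⟩
      intro h hh
      rcases Nat.lt_or_ge s h with h5 | h5
      · obtain rfl : h = s + 1 := by omega
        rwa [show i0 + (s+1) = i + 1 by omega, show j0 + (s+1) = j by omega]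
      · exact h3 h h5
    · refine ⟨i+1, j, 0, rfl, rfl, ?_, ?_⟩
      · intro h hh; obtain rfl : h = 0 := by omega
        simpa using hj
      · intro _ h2 h3
        exact hc ⟨h2, by simpa using h3⟩

theorem exists_end (n : ℕ) (ε : ℝ) (i j : ℕ) : ∀ k s, n - max i j - s = k → i + s < n → j + s < n →
    (∀ h, h ≤ s → RPone d f x ε (i + h) (j + h)) →
    ∃ l, s < l ∧ i + l ≤ n ∧ j + l ≤ n ∧ (∀ h, h < l → RPone d f x ε (i + h) (j + h)) ∧
      (max i j + l < n → ¬ RPone d f x ε (i + l) (j + l)) := by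
  intro k
  induction k with
  | zero => intro s; omega
  | succ k ih =>
    intro s hs h1 h2 h3
    by_cases hc : max i j + (s+1) < n ∧ RPone d f x ε (i + (s+1)) (j + (s+1))
    · obtain ⟨l, g1, g⟩ := ih (s+1) (by omega) (by omega) (by omega) (by
        intro h hh
        rcases Nat.lt_or_ge s h with h5 | h5
        · obtain rfl : h = s + 1 := by omega
          exact hc.2
        · exact h3 h h5)
      exact ⟨l, by omega, g⟩
    · refine ⟨s+1, by omega, by omega, by omega, fun h hh => h3 h (by omega), ?_⟩
      intro a b
      exact hc ⟨a, b⟩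

theorem sum_T_eq (n : ℕ) (ε : ℝ) : ∑ t ∈ T d f x n ε, t.2 = (Os d f x n ε).card := by
  have : ∑ t ∈ T d f x n ε, t.2 = ((T d f x n ε).sigma (fun t => range t.2)).card := by
    simp
  rw [this]
  refine Finset.card_bij (fun a _ => (a.1.1.1 + a.2, a.1.1.2 + a.2)) ?_ ?_ ?_
  · rintro ⟨⟨⟨i, j⟩, l⟩, h⟩ ha
    simp only [mem_sigma, mem_T, mem_range] at ha
    obtain ⟨⟨a1, a2, a3, a4, a5, a6, a7⟩, hh⟩ := ha
    simp only [Os, mem_filter, mem_product, mem_range]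
    exact ⟨⟨by omega, by omega⟩, by omega, a5 h hh⟩
  · rintro ⟨⟨⟨i, j⟩, l⟩, h⟩ ha ⟨⟨⟨i', j'⟩, l'⟩, h'⟩ ha' he
    simp only [mem_sigma, mem_T, mem_range] at ha ha'
    simp only [Prod.mk.injEq] at he
    have := start_le d f x ha.1 ha'.1 ha.2 he.1 he.2
    have := start_le d f x ha'.1 ha.1 ha'.2 he.1.symm he.2.symm
    obtain rfl : h = h' := by omega
    obtain rfl : i = i' := by omega
    obtain rfl : j = j' := by omega
    obtain rfl := len_unique d f x ha.1 ha'.1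
    rfl
  · rintro ⟨i, j⟩ hb
    simp only [Os, mem_filter, mem_product, mem_range] at hb
    obtain ⟨i0, j0, s, h1, h2, h3, h4⟩ := exists_start d f x ε i j hb.2.2
    obtain ⟨l, g1, g2, g3, g4, g5⟩ := exists_end d f x n ε i0 j0 _ s rfl (by omega) (by omega) h3
    refine ⟨⟨((i0, j0), l), s⟩, ?_, ?_⟩
    · simp only [mem_sigma, mem_T, mem_range]
      exact ⟨⟨by omega, g2, g3, by omega, g4, h4, g5⟩, g1⟩
    · simp [h1, h2]

theorem card_T_le (n : ℕ) (ε : ℝ) : (T d f x n ε).card ≤ 2 * n + (Zs d f x n ε).card := by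
  classical
  have h1 : (T d f x n ε).card = ((T d f x n ε).image Prod.fst).card := by
    rw [Finset.card_image_of_injOn]
    rintro ⟨⟨i, j⟩, l⟩ ha ⟨⟨i', j'⟩, l'⟩ ha' he
    simp only [mem_coe, mem_T] at ha ha'
    simp only [Prod.mk.injEq] at he
    obtain ⟨rfl, rfl⟩ := he
    obtain rfl := len_unique d f x ha ha'
    rfl
  rw [h1]
  have h2 : (T d f x n ε).image Prod.fst ⊆
      ((range n).image (fun i => (i, 0)) ∪ (range n).image (fun j => (0, j))) ∪
        (Zs d f x n ε).image (fun p => (p.1 + 1, p.2 + 1)) := by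
    intro p hp
    obtain ⟨⟨⟨i, j⟩, l⟩, ht, rfl⟩ := mem_image.1 hp
    rw [mem_T] at ht
    obtain ⟨a1, a2, a3, a4, a5, a6, a7⟩ := ht
    simp only [mem_union, mem_image, mem_range, Prod.mk.injEq, Zs, mem_filter, mem_product, Prod.exists]
    rcases Nat.eq_zero_or_pos i with hi | hi
    · left; right; exact ⟨j, by omega, by omega, rfl⟩
    rcases Nat.eq_zero_or_pos j with hj | hj
    · left; left; exact ⟨i, by omega, rfl, by omega⟩
    right
    exact ⟨i-1, j-1, ⟨⟨by omega, by omega⟩, a6 hi hj⟩, by omega, by omega⟩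
  refine (card_le_card h2).trans ((card_union_le _ _).trans ?_)
  have h3 := card_union_le ((range n).image (fun i => (i, 0))) ((range n).image (fun j => (0, j)))
  have h4 := card_image_le (s := range n) (f := fun i => (i, 0))
  have h5 := card_image_le (s := range n) (f := fun i => (0, i))
  have h6 := card_image_le (s := Zs d f x n ε) (f := fun p => (p.1 + 1, p.2 + 1))
  rw [card_range] at h4 h5
  omega

theorem card_Os_le (n : ℕ) (ε : ℝ) : (Os d f x n ε).card + n ≤ n ^ 2 := by
  classical
  have h : Os d f x n ε ⊆ (range n).offDiag := by
    intro p
    simp only [Os, mem_filter, mem_product, mem_offDiag]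
    tauto
  have := card_le_card h
  rw [offDiag_card, card_range] at this
  have : n ≤ n * n := Nat.le_mul_self n
  rw [pow_two]; omega

theorem le_card_Os (n : ℕ) (ε : ℝ) : n ^ 2 ≤ (Os d f x n ε).card + n + (Zs d f x n ε).card := by
  classical
  have h : (range n ×ˢ range n) ⊆ (Os d f x n ε ∪ (range n).image (fun i => (i,i))) ∪ Zs d f x n ε := by
    rintro ⟨i, j⟩ hp
    simp only [Os, Zs, mem_union, mem_filter, hp, mem_image, mem_range, true_and, Prod.mk.injEq]
    simp only [mem_product, mem_range] at hp
    by_cases hij : i = j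
    · left; right; exact ⟨i, hp.1, rfl, hij⟩
    · tauto
  have h1 := card_le_card h
  have h2 := card_union_le (Os d f x n ε ∪ (range n).image (fun i => (i,i))) (Zs d f x n ε)
  have h3 := card_union_le (Os d f x n ε) ((range n).image (fun i => (i,i)))
  have h4 := card_image_le (s := range n) (f := fun i => (i, i))
  rw [card_product, card_range] at h1
  rw [card_range] at h4
  rw [pow_two]; omega

theorem Nlines_eq (n : ℕ) (ε : ℝ) (l : ℕ) : Nlines d f x n ε l =
    ((T d f x n ε).filter (fun t => t.2 = l)).card := by
  classical
  have : {p : ℕ × ℕ | IsLine d f x n ε p.1 p.2 l} =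
      (((T d f x n ε).filter (fun t => t.2 = l)).image Prod.fst : Finset (ℕ × ℕ)) := by
    ext ⟨i, j⟩
    simp only [Set.mem_ofPred_eq, coe_image, Set.mem_image, mem_coe, mem_filter]
    constructor
    · intro h; exact ⟨((i,j),l), ⟨(mem_T d f x).2 h, rfl⟩, rfl⟩
    · rintro ⟨⟨⟨i', j'⟩, l'⟩, ⟨h, h1⟩, h2⟩
      simp only [Prod.mk.injEq] at h1 h2
      obtain ⟨rfl, rfl⟩ := h2
      subst h1
      exact (mem_T d f x).1 h
  rw [Nlines, this, Set.ncard_coe_finset, card_image_of_injOn]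
  rintro ⟨p, l⟩ ha ⟨p', l'⟩ ha' he
  simp only [coe_filter, Set.mem_ofPred_eq] at ha ha' he
  rw [he, ha.2, ha'.2]

theorem tsum_lines (n : ℕ) (ε : ℝ) (ℓ : ℕ) (g : ℕ → ℝ) :
    ∑' k : ℕ, g (ℓ + k) * Pline d f x n ε (ℓ + k) =
      (∑ t ∈ (T d f x n ε).filter (fun t => ℓ ≤ t.2), g t.2) / ((n:ℝ)^2 - n) := by
  classical
  rw [tsum_eq_sum (s := range (n+1))]
  · have e : ∑ k ∈ range (n+1), g (ℓ + k) * Pline d f x n ε (ℓ + k)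
        = ∑ l ∈ Ico ℓ (ℓ + (n+1)), g l * Pline d f x n ε l := by
      rw [Finset.sum_Ico_eq_sum_range]; simp
    rw [e, ← Finset.sum_fiberwise_of_maps_to (t := Ico ℓ (ℓ + (n+1))) (g := Prod.snd), Finset.sum_div]
    · refine Finset.sum_congr rfl fun l hl => ?_
      rw [Pline, Nlines_eq, Finset.filter_filter]
      have : (T d f x n ε).filter (fun t => ℓ ≤ t.2 ∧ t.2 = l) =
          (T d f x n ε).filter (fun t => t.2 = l) := by
        refine Finset.filter_congr fun t _ => ?_
        rw [mem_Ico] at hl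
        constructor
        · tauto
        · intro h; exact ⟨by omega, h⟩
      rw [this, Finset.sum_congr rfl (g := fun _ => g l)]
      · rw [Finset.sum_const, nsmul_eq_mul]; ring
      · intro t ht
        rw [(mem_filter.1 ht).2]
    · rintro ⟨⟨i, j⟩, l⟩ ht
      simp only [mem_filter, mem_T] at ht
      obtain ⟨⟨a1, a2, a3, -⟩, h⟩ := ht
      simp only [mem_Ico]; omega
  · intro k hk
    rw [Pline, Nlines_eq, Finset.filter_false_of_mem]
    · simp
    · rintro ⟨⟨i, j⟩, l⟩ ht
      rw [mem_T] at ht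
      obtain ⟨a1, a2, a3, -⟩ := ht
      simp only [mem_range] at hk
      simp only; omega

theorem RRate_eq (n : ℕ) (ε : ℝ) (ℓ : ℕ) : RRate d f x n ε ℓ =
    (∑ t ∈ (T d f x n ε).filter (fun t => ℓ ≤ t.2), (t.2:ℝ)) / ((n:ℝ)^2 - n) :=
  tsum_lines d f x n ε ℓ (fun k => (k:ℝ))

theorem PlineGe_eq (n : ℕ) (ε : ℝ) (ℓ : ℕ) : PlineGe d f x n ε ℓ =
    ((T d f x n ε).filter (fun t => ℓ ≤ t.2)).card / ((n:ℝ)^2 - n) := by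
  have := tsum_lines d f x n ε ℓ (fun _ => 1)
  simpa [PlineGe] using this

theorem A_upper (n : ℕ) (ε : ℝ) (ℓ : ℕ) :
    ∑ t ∈ (T d f x n ε).filter (fun t => ℓ ≤ t.2), (t.2:ℝ) ≤ (n:ℝ)^2 - n := by
  have h1 : ∑ t ∈ (T d f x n ε).filter (fun t => ℓ ≤ t.2), t.2 ≤ ∑ t ∈ T d f x n ε, t.2 :=
    Finset.sum_le_sum_of_subset (filter_subset _ _)
  rw [sum_T_eq] at h1
  have h2 := card_Os_le d f x n ε
  have h3 : (∑ t ∈ (T d f x n ε).filter (fun t => ℓ ≤ t.2), t.2) + n ≤ n^2 := by omega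
  have h4 : ((∑ t ∈ (T d f x n ε).filter (fun t => ℓ ≤ t.2), t.2 : ℕ) : ℝ) + n ≤ (n:ℝ)^2 := by
    exact_mod_cast h3
  push_cast at h4
  linarith

theorem A_lower (n : ℕ) (ε : ℝ) (ℓ : ℕ) :
    (n:ℝ)^2 - n ≤ ∑ t ∈ (T d f x n ε).filter (fun t => ℓ ≤ t.2), (t.2:ℝ)
      + ((Zs d f x n ε).card + ℓ * (2 * n + (Zs d f x n ε).card)) := by
  have h1 := Finset.sum_filter_add_sum_filter_not (T d f x n ε) (fun t => ℓ ≤ t.2) (fun t => t.2)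
  rw [sum_T_eq] at h1
  have h2 := le_card_Os d f x n ε
  have h3 : ∑ t ∈ (T d f x n ε).filter (fun t => ¬ ℓ ≤ t.2), t.2 ≤ ℓ * (2 * n + (Zs d f x n ε).card) := by
    calc _ ≤ ∑ t ∈ (T d f x n ε).filter (fun t => ¬ ℓ ≤ t.2), ℓ := by
            refine Finset.sum_le_sum fun t ht => ?_
            have := (mem_filter.1 ht).2
            omega
      _ = ((T d f x n ε).filter (fun t => ¬ ℓ ≤ t.2)).card * ℓ := by simp
      _ ≤ (T d f x n ε).card * ℓ := Nat.mul_le_mul_right _ (card_filter_le _ _)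
      _ ≤ (2 * n + (Zs d f x n ε).card) * ℓ := Nat.mul_le_mul_right _ (card_T_le d f x n ε)
      _ = _ := Nat.mul_comm _ _
  have h4 : n^2 ≤ (∑ t ∈ (T d f x n ε).filter (fun t => ℓ ≤ t.2), t.2)
      + ((Zs d f x n ε).card + ℓ * (2 * n + (Zs d f x n ε).card)) + n := by omega
  have h5 : (n:ℝ)^2 ≤ ((∑ t ∈ (T d f x n ε).filter (fun t => ℓ ≤ t.2), t.2 : ℕ) : ℝ)
      + ((Zs d f x n ε).card + ℓ * (2 * n + (Zs d f x n ε).card)) + n := by exact_mod_cast h4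
  push_cast at h5
  linarith

theorem tendsto_n_div : Tendsto (fun n : ℕ => (n:ℝ) / ((n:ℝ)^2 - n)) atTop (𝓝 0) := by
  have h : Tendsto (fun n : ℕ => ((n:ℝ) - 1)⁻¹) atTop (𝓝 0) := by
    apply Tendsto.inv_tendsto_atTop
    exact tendsto_atTop_add_const_right _ (-1) tendsto_natCast_atTop_atTop
  refine h.congr' ?_
  filter_upwards [eventually_ge_atTop 2] with n hn
  have : (2:ℝ) ≤ n := by exact_mod_cast hn
  have h1 : (n:ℝ) - 1 ≠ 0 := by linarith
  have h2 : (n:ℝ)^2 - n ≠ 0 := by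
    rw [show (n:ℝ)^2 - n = n * (n - 1) by ring]
    exact mul_ne_zero (by linarith) h1
  rw [inv_eq_one_div, div_eq_div_iff h1 h2]; ring

theorem main_lines (ε : ℝ) (ℓ : ℕ)
    (hZ : Tendsto (fun n : ℕ => ((Zs d f x n ε).card : ℝ) / (n:ℝ)^2) atTop (𝓝 0)) :
    Tendsto (fun n : ℕ => RRate d f x n ε ℓ) atTop (𝓝 1) ∧
    Tendsto (fun n : ℕ => DETrm d f x n ε ℓ) atTop (𝓝 1) ∧
    Tendsto (fun n : ℕ => LAvg d f x n ε ℓ) atTop atTop := by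
  have hpos : ∀ n : ℕ, 2 ≤ n → (0:ℝ) < (n:ℝ)^2 - n := by
    intro n hn
    have : (2:ℝ) ≤ n := by exact_mod_cast hn
    nlinarith
  have hZ' : Tendsto (fun n : ℕ => ((Zs d f x n ε).card : ℝ) / ((n:ℝ)^2 - n)) atTop (𝓝 0) := by
    have := hZ.const_mul 2
    rw [mul_zero] at this
    refine squeeze_zero' ?_ ?_ this
    · filter_upwards [eventually_ge_atTop 2] with n hn
      have := hpos n hn
      positivity
    · filter_upwards [eventually_ge_atTop 2] with n hn
      have := hpos n hn
      have hn' : (2:ℝ) ≤ n := by exact_mod_cast hn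
      rw [← mul_div_assoc, div_le_div_iff₀ this (by positivity)]
      have : (0:ℝ) ≤ (Zs d f x n ε).card := by positivity
      have h3 : (n:ℝ)^2 ≤ 2 * ((n:ℝ)^2 - n) := by nlinarith
      nlinarith [mul_le_mul_of_nonneg_left h3 this]
  have hB : Tendsto (fun n : ℕ => (2 * n + (Zs d f x n ε).card : ℝ) / ((n:ℝ)^2 - n)) atTop (𝓝 0) := by
    have := (tendsto_n_div.const_mul 2).add hZ'
    simp only [mul_zero, add_zero] at this
    refine this.congr fun n => ?_
    ring
  have hRR : ∀ ℓ : ℕ, Tendsto (fun n : ℕ => RRate d f x n ε ℓ) atTop (𝓝 1) := by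
    intro ℓ
    have hl : Tendsto (fun n : ℕ => 1 - (((Zs d f x n ε).card : ℝ) / ((n:ℝ)^2 - n) +
        ℓ * ((2 * n + (Zs d f x n ε).card : ℝ) / ((n:ℝ)^2 - n)))) atTop (𝓝 1) := by
      have := (hZ'.add (hB.const_mul (ℓ:ℝ))).const_sub 1
      simpa using this
    refine tendsto_of_tendsto_of_tendsto_of_le_of_le' hl tendsto_const_nhds ?_ ?_
    · filter_upwards [eventually_ge_atTop 2] with n hn
      have hp := hpos n hn
      rw [RRate_eq, le_div_iff₀ hp]
      have := A_lower d f x n ε ℓ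
      have e : ∀ D z b : ℝ, D ≠ 0 → (1 - (z / D + ℓ * (b / D))) * D = D - (z + ℓ * b) := by
        intro D z b hD
        field_simp
      rw [e _ _ _ hp.ne']
      linarith
    · filter_upwards [eventually_ge_atTop 2] with n hn
      rw [RRate_eq]
      exact div_le_one_of_le₀ (A_upper d f x n ε ℓ) (hpos n hn).le
  refine ⟨hRR ℓ, ?_, ?_⟩
  · have := (hRR ℓ).div (hRR 1) one_ne_zero
    rw [div_one] at this
    exact this
  · have hP0 : Tendsto (fun n : ℕ => PlineGe d f x n ε ℓ) atTop (𝓝 0) := by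
      refine squeeze_zero' ?_ ?_ hB
      · filter_upwards [eventually_ge_atTop 2] with n hn
        have := hpos n hn
        rw [PlineGe_eq]; positivity
      · filter_upwards [eventually_ge_atTop 2] with n hn
        have := hpos n hn
        rw [PlineGe_eq]
        refine div_le_div_of_nonneg_right ?_ this.le
        have h := (card_filter_le (T d f x n ε) (fun t => ℓ ≤ t.2)).trans (card_T_le d f x n ε)
        exact_mod_cast h
    have hP1 : ∀ᶠ n : ℕ in atTop, 0 < PlineGe d f x n ε ℓ := by
      filter_upwards [eventually_ge_atTop 2, (hRR ℓ).eventually (lt_mem_nhds zero_lt_one)] with n hn hr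
      have := hpos n hn
      rw [PlineGe_eq]
      rw [RRate_eq] at hr
      refine div_pos ?_ this
      rw [Nat.cast_pos, Finset.card_pos]
      by_contra hc
      rw [Finset.not_nonempty_iff_eq_empty] at hc
      rw [hc] at hr
      simp at hr
    have hP : Tendsto (fun n : ℕ => PlineGe d f x n ε ℓ) atTop (𝓝[>] 0) :=
      tendsto_nhdsWithin_iff.2 ⟨hP0, hP1⟩
    have := (hRR ℓ).pos_mul_atTop zero_lt_one (tendsto_inv_nhdsGT_zero.comp hP)
    refine this.congr fun n => ?_
    simp [LAvg, div_eq_mul_inv]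

end lines
end NP

namespace NP

theorem substWord_eq (ζ : Bool → List Bool) (w : List Bool) : substWord ζ w = w.flatMap ζ := by
  induction w with
  | nil => rfl
  | cons a w ih => rw [List.flatMap_cons, ← ih]; rfl

theorem substWord_append (ζ : Bool → List Bool) (u v : List Bool) :
    substWord ζ (u ++ v) = substWord ζ u ++ substWord ζ v := by
  simp [substWord_eq]

theorem iter_append (ζ : Bool → List Bool) (k : ℕ) : ∀ (u v : List Bool),
    (substWord ζ)^[k] (u ++ v) = (substWord ζ)^[k] u ++ (substWord ζ)^[k] v := by
  induction k with
  | zero => intro u v; rfl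
  | succ k ih => intro u v; simp only [Function.iterate_succ_apply, substWord_append, ih]

theorem iter_nil (ζ : Bool → List Bool) (k : ℕ) : (substWord ζ)^[k] [] = [] := by
  induction k with
  | zero => rfl
  | succ k ih => rw [Function.iterate_succ_apply]; exact ih

theorem iter_flatMap (ζ : Bool → List Bool) (k : ℕ) (w : List Bool) :
    (substWord ζ)^[k] w = w.flatMap (fun c => (substWord ζ)^[k] [c]) := by
  induction w with
  | nil => exact iter_nil ζ k
  | cons a w ih =>
    rw [List.flatMap_cons, ← ih, ← iter_append]; rfl

theorem length_substWord {ζ : Bool → List Bool} {q : ℕ} (h : ∀ a, (ζ a).length = q) (w : List Bool) :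
    (substWord ζ w).length = q * w.length := by
  rw [substWord_eq]
  induction w with
  | nil => rfl
  | cons a w ih => rw [List.flatMap_cons, List.length_append, ih, h, List.length_cons]; ring

theorem length_iter {ζ : Bool → List Bool} {q : ℕ} (h : ∀ a, (ζ a).length = q) (k : ℕ) (w : List Bool) :
    ((substWord ζ)^[k] w).length = q ^ k * w.length := by
  induction k with
  | zero => simp
  | succ k ih => rw [Function.iterate_succ_apply', length_substWord h, ih]; ring

theorem count_substWord {ζ : Bool → List Bool} {a : Bool} (h : (ζ a).count (!a) = 0) (w : List Bool) :
    (substWord ζ w).count (!a) = (ζ (!a)).count (!a) * w.count (!a) := by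
  rw [substWord_eq]
  induction w with
  | nil => rfl
  | cons c w ih =>
    rw [List.flatMap_cons, List.count_append, ih]
    by_cases hc : c = !a
    · subst hc; rw [List.count_cons_self]; ring
    · have : c = a := by cases a <;> cases c <;> simp_all
      subst this
      rw [h, List.count_cons_of_ne hc]; ring

theorem count_iter {ζ : Bool → List Bool} {a : Bool} (h : (ζ a).count (!a) = 0) (k : ℕ) (w : List Bool) :
    ((substWord ζ)^[k] w).count (!a) = (ζ (!a)).count (!a) ^ k * w.count (!a) := by
  induction k with
  | zero => simp
  | succ k ih => rw [Function.iterate_succ_apply', count_substWord h, ih]; ring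

theorem prefix_count {φ : Bool → List Bool} {b : Bool} {Q P : ℕ} (hQ : ∀ c, (φ c).length = Q)
    (hP : ∀ c, (φ c).count b ≤ P) : ∀ (v w : List Bool), w <+: v.flatMap φ →
    Q * w.count b ≤ (w.length + Q) * P := by
  intro v
  induction v with
  | nil => intro w hw; simp at hw; subst hw; simp
  | cons c v ih =>
    intro w hw
    rw [List.flatMap_cons] at hw
    rcases List.prefix_or_prefix_of_prefix hw (List.prefix_append _ _) with h | ⟨w', rfl⟩
    · have h1 := (h.sublist.count_le b).trans (hP c)
      calc Q * w.count b ≤ Q * P := Nat.mul_le_mul_left _ h1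
        _ ≤ _ := Nat.mul_le_mul_right _ (by omega)
    · have := ih w' ((List.prefix_append_right_inj _).1 hw)
      rw [List.count_append, List.length_append, hQ]
      have h2 := Nat.mul_le_mul_left Q (hP c)
      nlinarith

theorem infix_count {φ : Bool → List Bool} {b : Bool} {Q P : ℕ} (hQ : ∀ c, (φ c).length = Q)
    (hP : ∀ c, (φ c).count b ≤ P) : ∀ (v w : List Bool), w <:+: v.flatMap φ →
    Q * w.count b ≤ (w.length + 2 * Q) * P := by
  intro v
  induction v with
  | nil => intro w hw; simp at hw; subst hw; simp
  | cons c v ih =>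
    intro w hw
    rw [List.flatMap_cons] at hw
    rcases List.infix_append_iff.1 hw with h | h | ⟨w1, w2, rfl, h1, h2⟩
    · have h1 := (h.sublist.count_le b).trans (hP c)
      calc Q * w.count b ≤ Q * P := Nat.mul_le_mul_left _ h1
        _ ≤ _ := Nat.mul_le_mul_right _ (by omega)
    · exact ih w h
    · have g1 := Nat.mul_le_mul_left Q ((h1.sublist.count_le b).trans (hP c))
      have g2 := prefix_count hQ hP v w2 h2
      rw [List.count_append, List.length_append]
      nlinarith [Nat.zero_le (w1.length * P)]

/-- number of `i < n` with `y i ≠ a` -/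
def cnt (y : ℕ → Bool) (a : Bool) (n : ℕ) : ℕ := ((Finset.range n).filter (fun i => y i ≠ a)).card

theorem cnt_eq (y : ℕ → Bool) (a : Bool) (n : ℕ) :
    cnt y a n = (List.ofFn fun t : Fin n => y (t : ℕ)).count (!a) := by
  induction n with
  | zero => simp [cnt]
  | succ n ih =>
    rw [List.ofFn_succ', List.concat_eq_append, List.count_append]
    simp only [Fin.val_castSucc, Fin.val_last]
    rw [← ih, cnt, Finset.range_add_one, Finset.filter_insert]
    split_ifs with h
    · rw [Finset.card_insert_of_notMem (by simp)]
      have : y n = !a := by cases a <;> cases h' : y n <;> simp_all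
      simp [cnt, this]
    · push Not at h
      simp [cnt, h]

theorem cnt_bound {ζ : Bool → List Bool} {q : ℕ} (hq : 1 ≤ q) (hlen : ∀ a, (ζ a).length = q) {a : Bool}
    (ha : (ζ a).count (!a) = 0) {y : ℕ → Bool} (hy : y ∈ SubstShift ζ) (k n : ℕ) :
    q ^ k * cnt y a n ≤ (n + 2 * q ^ k) * (ζ (!a)).count (!a) ^ k + q ^ k * q ^ k := by
  obtain ⟨c, K, hK, hinf⟩ := hy n
  rw [cnt_eq]
  set w := List.ofFn fun t : Fin n => y (t : ℕ) with hw
  have hwl : w.length = n := by simp [hw]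
  rcases Nat.lt_or_ge K k with h | h
  · have h1 := hinf.length_le
    rw [length_iter hlen] at h1
    have h2 : q ^ K ≤ q ^ k := Nat.pow_le_pow_right hq h.le
    have h3 : w.count (!a) ≤ w.length := List.count_le_length
    simp only [List.length_singleton, mul_one] at h1
    have : q ^ k * w.count (!a) ≤ q ^ k * q ^ k := Nat.mul_le_mul_left _ (by omega)
    omega
  · obtain ⟨r, rfl⟩ := Nat.exists_eq_add_of_le h
    rw [Function.iterate_add_apply, iter_flatMap] at hinf
    have := infix_count (φ := fun c => (substWord ζ)^[k] [c]) (b := !a) (Q := q ^ k)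
      (P := (ζ (!a)).count (!a) ^ k) (fun c => by rw [length_iter hlen]; simp)
      (fun c => by
        rw [count_iter ha]
        calc _ ≤ (ζ (!a)).count (!a) ^ k * 1 := Nat.mul_le_mul_left _ (by
                have := List.count_le_length (a := !a) (l := [c]); simpa using this)
          _ = _ := mul_one _) _ w hinf
    rw [hwl] at this
    omega

theorem tendsto_cnt_of_lt {ζ : Bool → List Bool} {q : ℕ} (hq : 1 ≤ q) (hlen : ∀ a, (ζ a).length = q) {a : Bool}
    (ha : (ζ a).count (!a) = 0) (hlt : (ζ (!a)).count (!a) < q) {y : ℕ → Bool} (hy : y ∈ SubstShift ζ) :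
    Tendsto (fun n : ℕ => (cnt y a n : ℝ) / n) atTop (𝓝 0) := by
  set p := (ζ (!a)).count (!a) with hp
  have hq0 : (0:ℝ) < q := by exact_mod_cast hq
  have hr1 : (p:ℝ) / q < 1 := by rw [div_lt_one hq0]; exact_mod_cast hlt
  have hr0 : 0 ≤ (p:ℝ) / q := by positivity
  have key : ∀ k n : ℕ, 1 ≤ n → (cnt y a n : ℝ) / n ≤ ((p:ℝ)/q)^k + (2 * (p:ℝ)^k + (q:ℝ)^k) * (n:ℝ)⁻¹ := by
    intro k n hn
    have hn0 : (0:ℝ) < n := by exact_mod_cast hn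
    have h := cnt_bound hq hlen ha hy k n
    rw [← hp] at h
    have h' : (q:ℝ) ^ k * cnt y a n ≤ (n + 2 * (q:ℝ) ^ k) * (p:ℝ) ^ k + (q:ℝ) ^ k * (q:ℝ) ^ k := by
      exact_mod_cast h
    have hQ : (0:ℝ) < (q:ℝ)^k := by positivity
    rw [div_pow, div_le_iff₀ hn0]
    generalize (q:ℝ)^k = Q at *
    generalize (p:ℝ)^k = P at *
    have e : (P / Q + (2 * P + Q) * (n:ℝ)⁻¹) * n = ((n + 2 * Q) * P + Q * Q) / Q := by
      field_simp; ring
    rw [e, le_div_iff₀ hQ]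
    linarith
  rw [Metric.tendsto_atTop]
  intro δ hδ
  obtain ⟨k, hk⟩ := exists_pow_lt_of_lt_one (half_pos hδ) hr1
  have h2 : Tendsto (fun n : ℕ => (2 * (p:ℝ)^k + (q:ℝ)^k) * (n:ℝ)⁻¹) atTop (𝓝 0) := by
    have := (tendsto_inv_atTop_nhds_zero_nat (𝕜 := ℝ)).const_mul (2 * (p:ℝ)^k + (q:ℝ)^k)
    rwa [mul_zero] at this
  obtain ⟨N, hN⟩ := ((h2.eventually (gt_mem_nhds (half_pos hδ))).and (eventually_ge_atTop 1)).exists_forall_of_atTop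
  refine ⟨N, fun n hn => ?_⟩
  obtain ⟨g1, g2⟩ := hN n hn
  have := key k n g2
  rw [Real.dist_eq, sub_zero, abs_of_nonneg (by positivity)]
  linarith

theorem const_iter {ζ : Bool → List Bool} (h : ∀ a, ∃ c, ∀ b ∈ ζ a, b = c) (a : Bool) (k : ℕ) :
    ∃ c, ∀ b ∈ (substWord ζ)^[k] [a], b = c := by
  induction k with
  | zero => exact ⟨a, by simp⟩
  | succ k ih =>
    obtain ⟨c, hc⟩ := ih
    obtain ⟨c', hc'⟩ := h c
    refine ⟨c', fun b hb => ?_⟩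
    rw [Function.iterate_succ_apply', substWord_eq, List.mem_flatMap] at hb
    obtain ⟨z, hz, hb⟩ := hb
    rw [hc z hz] at hb
    exact hc' b hb

theorem const_y {ζ : Bool → List Bool} (h : ∀ a, ∃ c, ∀ b ∈ ζ a, b = c) {y : ℕ → Bool}
    (hy : y ∈ SubstShift ζ) (i : ℕ) : y i = y 0 := by
  obtain ⟨a, k, -, hinf⟩ := hy (i+1)
  obtain ⟨c, hc⟩ := const_iter h a k
  have : ∀ t : Fin (i+1), y t = c := fun t => hc _ (hinf.subset (by rw [List.mem_ofFn]; exact ⟨t, rfl⟩))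
  exact (this ⟨i, by omega⟩).trans (this ⟨0, by omega⟩).symm

theorem structure_np {ζ : Bool → List Bool} {q : ℕ} (hζ : IsConstLenSubst ζ q) (hnp : ¬ IsPrimitive ζ) :
    (∃ a, (ζ a).count (!a) = 0 ∧ (ζ (!a)).count (!a) < q) ∨ ∀ a, ∃ c, ∀ b ∈ ζ a, b = c := by
  obtain ⟨hq, hlen⟩ := hζ
  by_cases hall : ∀ a, ∃ c, ∀ b ∈ ζ a, b = c
  · exact Or.inr hall
  left
  push Not at hall
  obtain ⟨x, hx⟩ := hall
  have hx' : ∀ c, c ∈ ζ x := by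
    intro c
    obtain ⟨b, hb, hne⟩ := hx (!c)
    have : b = c := by cases b <;> cases c <;> simp_all
    exact this ▸ hb
  have hcount : (ζ x).count x < q := by
    refine lt_of_le_of_ne (hlen x ▸ List.count_le_length) fun he => ?_
    rw [← hlen x, List.count_eq_length] at he
    have := he _ (hx' (!x))
    cases x <;> simp at this
  by_cases hm : x ∈ ζ (!x)
  · exfalso
    apply hnp
    refine ⟨2, by norm_num, ?_⟩
    have e : ∀ a, (substWord ζ)^[2] [a] = (ζ a).flatMap ζ := by
      intro a; simp [substWord_eq]
    intro a b
    rw [e, List.mem_flatMap]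
    refine ⟨x, ?_, hx' b⟩
    by_cases hax : a = x
    · rw [hax]; exact hx' x
    · have : a = !x := by cases a <;> cases x <;> simp_all
      rw [this]; exact hm
  · refine ⟨!x, ?_, ?_⟩
    · rw [Bool.not_not]; exact List.count_eq_zero_of_not_mem hm
    · rw [Bool.not_not]; exact hcount

theorem exists_letter {ζ : Bool → List Bool} {q : ℕ} (hζ : IsConstLenSubst ζ q) (hnp : ¬ IsPrimitive ζ)
    {y : ℕ → Bool} (hy : y ∈ SubstShift ζ) :
    ∃ a, Tendsto (fun n : ℕ => (cnt y a n : ℝ) / n) atTop (𝓝 0) := by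
  rcases structure_np hζ hnp with ⟨a, h1, h2⟩ | h
  · exact ⟨a, tendsto_cnt_of_lt (by have := hζ.1; omega) hζ.2 h1 h2 hy⟩
  · refine ⟨y 0, ?_⟩
    have : ∀ n, cnt y (y 0) n = 0 := by
      intro n
      simp [cnt, const_y h hy]
    simp [this]

theorem shift_iter {α : Type*} (z : ℕ → α) (i t : ℕ) : (shift^[i] z) t = z (t + i) := by
  induction i generalizing t with
  | zero => rfl
  | succ i ih => rw [Function.iterate_succ_apply', shift, ih]; congr 1; omega

theorem seqDist_le {α : Type*} (u v : ℕ → α) (N : ℕ) (h : ∀ i < N, u i = v i) :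
    seqDist u v ≤ (1/2:ℝ)^N := by
  unfold seqDist
  split_ifs with he
  · positivity
  · have hne : {i : ℕ | u i ≠ v i}.Nonempty := by
      by_contra hc
      apply he
      funext i
      by_contra hi
      exact hc ⟨i, hi⟩
    have : N ≤ sInf {i : ℕ | u i ≠ v i} := by
      by_contra hc
      push Not at hc
      exact (Nat.sInf_mem hne) (h _ hc)
    rw [zpow_neg, zpow_natCast, ← inv_pow, one_div]
    exact pow_le_pow_of_le_one (by norm_num) (by norm_num) this

/-- bad positions -/
def bad (y : ℕ → Bool) (a : Bool) (M n : ℕ) : Finset ℕ :=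
  (Finset.range n).filter (fun i => ∃ k < M, y (i + k) ≠ a)

theorem card_bad (y : ℕ → Bool) (a : Bool) (M n : ℕ) : (bad y a M n).card ≤ M * (cnt y a n + M) := by
  have h1 : bad y a M n ⊆ (Finset.range M).biUnion
      (fun k => (Finset.range n).filter (fun i => y (i + k) ≠ a)) := by
    intro i
    simp only [bad, Finset.mem_filter, Finset.mem_biUnion, Finset.mem_range]
    rintro ⟨h, k, hk, hne⟩
    exact ⟨k, hk, h, hne⟩
  refine (Finset.card_le_card h1).trans ?_
  have h2 := Finset.card_biUnion_le_card_mul (Finset.range M)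
      (fun k => (Finset.range n).filter (fun i => y (i + k) ≠ a)) (cnt y a n + M) ?_
  · simpa using h2
  · intro k hk
    rw [Finset.mem_range] at hk
    have h3 : ((Finset.range n).filter (fun i => y (i + k) ≠ a)).image (fun i => i + k) ⊆
        (Finset.range n).filter (fun i => y i ≠ a) ∪ (Finset.range M).image (fun i => n + i) := by
      intro j hj
      simp only [Finset.mem_image, Finset.mem_filter, Finset.mem_range, Finset.mem_union] at hj ⊢
      obtain ⟨i, ⟨hi, hne⟩, rfl⟩ := hj
      by_cases hc : i + k < n
      · exact Or.inl ⟨hc, hne⟩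
      · exact Or.inr ⟨i + k - n, by omega, by omega⟩
    have h4 := Finset.card_le_card h3
    rw [Finset.card_image_of_injective _ (add_left_injective k)] at h4
    have h5 := Finset.card_union_le ((Finset.range n).filter (fun i => y i ≠ a)) ((Finset.range M).image (fun i => n + i))
    have h6 := Finset.card_image_le (s := Finset.range M) (f := fun i => n + i)
    rw [Finset.card_range] at h6
    unfold cnt
    omega

theorem tendsto_bad {y : ℕ → Bool} {a : Bool} (h : Tendsto (fun n : ℕ => (cnt y a n : ℝ) / n) atTop (𝓝 0)) (M : ℕ) :
    Tendsto (fun n : ℕ => ((bad y a M n).card : ℝ) / n) atTop (𝓝 0) := by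
  have h2 : Tendsto (fun n : ℕ => (M:ℝ) * ((cnt y a n : ℝ) / n + M * (n:ℝ)⁻¹)) atTop (𝓝 0) := by
    have := (h.add ((tendsto_inv_atTop_nhds_zero_nat (𝕜 := ℝ)).const_mul (M:ℝ))).const_mul (M:ℝ)
    simpa using this
  refine squeeze_zero (fun n => by positivity) (fun n => ?_) h2
  have : ((bad y a M n).card : ℝ) ≤ M * (cnt y a n + M) := by exact_mod_cast card_bad y a M n
  calc _ ≤ (M * (cnt y a n + M) : ℝ) / n := div_le_div_of_nonneg_right this (by positivity)
    _ = _ := by ring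

theorem exists_window (y : ℕ → Bool) (a : Bool) (m ℓ : ℕ) (ε : ℝ) (hε : 0 < ε) :
    ∃ M, ∀ i j, (∀ k < M, y (i + k) = a) → (∀ k < M, y (j + k) = a) → ∀ h < ℓ,
      RPone seqDist shift (embedSeq m y) ε (i + h) (j + h) := by
  obtain ⟨N, hN⟩ := exists_pow_lt_of_lt_one hε (show (1/2:ℝ) < 1 by norm_num)
  refine ⟨N + m + ℓ, fun i j hi hj h hh => ?_⟩
  unfold RPone
  refine (seqDist_le _ _ N fun t ht => ?_).trans hN.le
  rw [shift_iter, shift_iter]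
  funext s
  have := s.2
  simp only [embedSeq]
  rw [show t + (i + h) + (s:ℕ) = i + (t + h + s) by ring, show t + (j + h) + (s:ℕ) = j + (t + h + s) by ring,
    hi _ (by omega), hj _ (by omega)]

/-- exceptional pairs -/
def exc (y : ℕ → Bool) (a : Bool) (M n : ℕ) : Finset (ℕ × ℕ) :=
  bad y a M n ×ˢ Finset.range n ∪ Finset.range n ×ˢ bad y a M n

theorem tendsto_exc {y : ℕ → Bool} {a : Bool} (h : Tendsto (fun n : ℕ => (cnt y a n : ℝ) / n) atTop (𝓝 0)) (M : ℕ) :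
    Tendsto (fun n : ℕ => ((exc y a M n).card : ℝ) / (n:ℝ)^2) atTop (𝓝 0) := by
  have h2 := (tendsto_bad h M).const_mul 2
  rw [mul_zero] at h2
  refine squeeze_zero (fun n => by positivity) (fun n => ?_) h2
  have h3 : (exc y a M n).card ≤ 2 * (bad y a M n).card * n := by
    refine (Finset.card_union_le _ _).trans ?_
    rw [Finset.card_product, Finset.card_product, Finset.card_range]
    apply le_of_eq; ring
  have h4 : ((exc y a M n).card : ℝ) ≤ 2 * (bad y a M n).card * n := by exact_mod_cast h3
  rcases Nat.eq_zero_or_pos n with rfl | hn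
  · simp
  have hn0 : (0:ℝ) < n := by exact_mod_cast hn
  rw [div_le_iff₀ (by positivity)]
  refine h4.trans (le_of_eq ?_)
  field_simp

theorem notMem_exc {y : ℕ → Bool} {a : Bool} {M n i j : ℕ} (hi : i < n) (hj : j < n)
    (h : (i, j) ∉ exc y a M n) : (∀ k < M, y (i + k) = a) ∧ (∀ k < M, y (j + k) = a) := by
  simp only [exc, bad, Finset.mem_union, Finset.mem_product, Finset.mem_filter, Finset.mem_range, hi, hj,
    true_and, and_true, not_or, not_exists, not_and, not_not] at h
  exact h

end NP

/-- Recurrence characteristics of non-primitive substitutions: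
For a non-primitive binary substitution ζ of constant length q ≥ 2, every y ∈ X_ζ,
m, ℓ ∈ ℕ and ε > 0: C_ℓ(y^{(m)},n,ε) → 1, RR_ℓ(y^{(m)},n,ε) → 1, DET_ℓ(y^{(m)},n,ε) → 1
and L_ℓ(y^{(m)},n,ε) → ∞ as n → ∞. -/
theorem nonprimitive_recurrence_characteristics
    (ζ : Bool → List Bool) (q : ℕ) (hζ : IsConstLenSubst ζ q)
    (hnp : ¬ IsPrimitive ζ)
    (y : ℕ → Bool) (hy : y ∈ SubstShift ζ)
    (m ℓ : ℕ) (hm : 1 ≤ m) (hℓ : 1 ≤ ℓ) (ε : ℝ) (hε : 0 < ε) :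
    Tendsto (fun n : ℕ => corrSum seqDist shift (embedSeq m y) ℓ n ε) atTop (𝓝 1) ∧
    Tendsto (fun n : ℕ => RRate seqDist shift (embedSeq m y) n ε ℓ) atTop (𝓝 1) ∧
    Tendsto (fun n : ℕ => DETrm seqDist shift (embedSeq m y) n ε ℓ) atTop (𝓝 1) ∧
    Tendsto (fun n : ℕ => LAvg seqDist shift (embedSeq m y) n ε ℓ) atTop atTop := by
  obtain ⟨a, ha⟩ := NP.exists_letter hζ hnp hy
  obtain ⟨M, hM⟩ := NP.exists_window y a m ℓ ε hε
  have hE := NP.tendsto_exc ha M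
  refine ⟨?_, NP.main_lines _ _ _ ε ℓ ?_⟩
  · have hl := hE.const_sub 1
    rw [sub_zero] at hl
    have hsub : ∀ n : ℕ, {p : ℕ × ℕ | p.1 < n ∧ p.2 < n ∧ ∀ k, k < ℓ →
        seqDist (shift^[p.1 + k] (embedSeq m y)) (shift^[p.2 + k] (embedSeq m y)) ≤ ε} ⊆
        ((Finset.range n ×ˢ Finset.range n : Finset (ℕ × ℕ)) : Set (ℕ × ℕ)) := by
      rintro n ⟨i, j⟩ ⟨h1, h2, -⟩
      simp only [Finset.coe_product, Set.mem_prod, Finset.mem_coe, Finset.mem_range]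
      exact ⟨h1, h2⟩
    refine tendsto_of_tendsto_of_tendsto_of_le_of_le' hl tendsto_const_nhds ?_ ?_
    · filter_upwards [eventually_ge_atTop 1] with n hn
      have hn0 : (0:ℝ) < n := by exact_mod_cast hn
      have h1 : (n:ℝ)^2 ≤ (Set.ncard {p : ℕ × ℕ | p.1 < n ∧ p.2 < n ∧ ∀ k, k < ℓ →
        seqDist (shift^[p.1 + k] (embedSeq m y)) (shift^[p.2 + k] (embedSeq m y)) ≤ ε} : ℝ)
          + (NP.exc y a M n).card := by
        have h2 : ((Finset.range n ×ˢ Finset.range n : Finset (ℕ × ℕ)) : Set (ℕ × ℕ)) ⊆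
            {p : ℕ × ℕ | p.1 < n ∧ p.2 < n ∧ ∀ k, k < ℓ →
              seqDist (shift^[p.1 + k] (embedSeq m y)) (shift^[p.2 + k] (embedSeq m y)) ≤ ε} ∪
            (NP.exc y a M n : Set (ℕ × ℕ)) := by
          rintro ⟨i, j⟩ hp
          simp only [Finset.coe_product, Set.mem_prod, Finset.mem_coe, Finset.mem_range] at hp
          by_cases hc : (i, j) ∈ NP.exc y a M n
          · exact Or.inr hc
          · obtain ⟨g1, g2⟩ := NP.notMem_exc hp.1 hp.2 hc
            exact Or.inl ⟨hp.1, hp.2, fun k hk => hM i j g1 g2 k hk⟩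
        have h3 := Set.ncard_le_ncard h2
          (((Finset.finite_toSet _).subset (hsub n)).union (Finset.finite_toSet _))
        have h4 := h3.trans (Set.ncard_union_le _ _)
        rw [Set.ncard_coe_finset, Set.ncard_coe_finset, Finset.card_product, Finset.card_range,
          ← pow_two] at h4
        exact_mod_cast h4
      rw [corrSum, le_div_iff₀ (by positivity), sub_mul, div_mul_cancel₀ _ (by positivity)]
      linarith
    · refine Eventually.of_forall fun n => ?_
      refine div_le_one_of_le₀ ?_ (by positivity)
      have h3 := Set.ncard_le_ncard (hsub n) (Finset.finite_toSet _)
      rw [Set.ncard_coe_finset, Finset.card_product, Finset.card_range, ← pow_two] at h3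
      exact_mod_cast h3
  · refine squeeze_zero (fun n => by positivity) (fun n => ?_) hE
    refine div_le_div_of_nonneg_right ?_ (by positivity)
    rw [Nat.cast_le]
    refine Finset.card_le_card ?_
    rintro ⟨i, j⟩ hp
    simp only [NP.Zs, Finset.mem_filter, Finset.mem_product, Finset.mem_range] at hp
    by_contra hc
    obtain ⟨g1, g2⟩ := NP.notMem_exc hp.1.1 hp.1.2 hc
    exact hp.2 (by simpa using hM i j g1 g2 0 (by omega))
end

section
/- Let ζ be a uniform binary substitution (a substitution of constant length q ≥ 2 on {0,1}). Then for every y ∈ X_ζ and every m, ℓ ∈ ℕ, the asymptotic determinism DET_ℓ(y^{(m)}, ∞, ε) = lim_{n→∞} DET_ℓ(y^{(m)}, n, ε) exists for every sufficiently small ε > 0 and lim_{ε→0} DET_ℓ(y^{(m)}, ∞, ε) = 1. -/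
open Filter Topology MeasureTheory

namespace RQAProof
open RQA Filter Topology

section words
variable (ζ : Bool → List Bool) (q : ℕ)

def W : ℕ → Bool → ℕ → Bool
  | 0, a, _ => a
  | k+1, a, i => W k ((ζ a).getD (i / q^k) false) (i % q^k)

variable {ζ q}

lemma substWord_cons (a : Bool) (v : List Bool) :
    substWord ζ (a :: v) = ζ a ++ substWord ζ v := rfl

lemma substWord_length (h : IsConstLenSubst ζ q) (v : List Bool) :
    (substWord ζ v).length = q * v.length := by
  induction v with
  | nil => simp [substWord]
  | cons a v ih => rw [substWord_cons, List.length_append, ih, h.2, List.length_cons]; ring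

lemma iter_length (h : IsConstLenSubst ζ q) (k : ℕ) (v : List Bool) :
    ((substWord ζ)^[k] v).length = q^k * v.length := by
  induction k generalizing v with
  | zero => simp
  | succ k ih => rw [Function.iterate_succ_apply, ih, substWord_length h, pow_succ]; ring

lemma substWord_getD (h : IsConstLenSubst ζ q) (v : List Bool) (j : ℕ) (hj : j < q * v.length) :
    (substWord ζ v).getD j false = (ζ (v.getD (j / q) false)).getD (j % q) false := by
  have hq : 0 < q := by have := h.1; omega
  induction v generalizing j with
  | nil => simp at hj
  | cons a v ih =>
    rw [substWord_cons]
    by_cases hjq : j < q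
    · rw [List.getD_append _ _ _ _ (by rw [h.2]; exact hjq), Nat.div_eq_of_lt hjq,
        Nat.mod_eq_of_lt hjq]
      simp
    · push Not at hjq
      obtain ⟨j', rfl⟩ := Nat.exists_eq_add_of_le hjq
      rw [List.getD_append_right _ _ _ _ (by rw [h.2]; exact hjq), h.2,
        Nat.add_sub_cancel_left, ih _ (by rw [List.length_cons, mul_add] at hj; omega),
        Nat.add_div_left _ hq, Nat.add_mod_left]
      simp

lemma iter_getD (h : IsConstLenSubst ζ q) (k : ℕ) (v : List Bool) (i : ℕ)
    (hi : i < q^k * v.length) :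
    ((substWord ζ)^[k] v).getD i false = W ζ q k (v.getD (i / q^k) false) (i % q^k) := by
  have hq : 0 < q := by have := h.1; omega
  induction k generalizing v with
  | zero => simp [W]
  | succ k ih =>
    have h1 : i < q^k * (q * v.length) := by rw [pow_succ] at hi; rw [← mul_assoc]; exact hi
    rw [Function.iterate_succ_apply, ih _ (by rw [substWord_length h]; exact h1),
      substWord_getD h _ _ (by rw [Nat.div_lt_iff_lt_mul (by positivity)]; rw [mul_comm]; exact h1)]
    simp only [W]
    rw [pow_succ, Nat.mod_mul_right_div_self, Nat.mod_mul_right_mod, Nat.div_div_eq_div_mul]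

lemma base (h : IsConstLenSubst ζ q) {y : ℕ → Bool} (hy : y ∈ SubstShift ζ) (n : ℕ) :
    ∃ K a s, n + s ≤ q^K ∧ ∀ i < n, y i = ((substWord ζ)^[K] [a]).getD (i + s) false := by
  obtain ⟨a, K, -, p, t, hpt⟩ := hy n
  refine ⟨K, a, p.length, ?_, ?_⟩
  · have := iter_length h K [a]
    rw [← hpt] at this
    simp at this
    omega
  · intro i hi
    rw [← hpt, List.append_assoc, List.getD_append_right _ _ _ _ (by omega),
      Nat.add_sub_cancel, List.getD_append _ _ _ _ (by simpa using hi)]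
    simp [List.getD_eq_getElem?_getD, hi]

lemma decomp (h : IsConstLenSubst ζ q) {y : ℕ → Bool} (hy : y ∈ SubstShift ζ) (k n : ℕ) :
    ∃ s, ∃ z : ℕ → Bool, s < q^k ∧
      ∀ i < n, y i = W ζ q k (z ((i+s) / q^k)) ((i+s) % q^k) := by
  have hq : 0 < q := by have := h.1; omega
  have hqk : 0 < q^k := by positivity
  obtain ⟨K, a, s, h1, h2⟩ := base h hy (n + q^k)
  have hkK : k ≤ K := (Nat.pow_le_pow_iff_right h.1).1 (show q^k ≤ q^K by omega)
  obtain ⟨j, rfl⟩ := Nat.exists_eq_add_of_le hkK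
  refine ⟨s % q^k, fun t => ((substWord ζ)^[j] [a]).getD (t + s / q^k) false,
    Nat.mod_lt _ hqk, fun i hi => ?_⟩
  rw [h2 i (by omega), Function.iterate_add_apply, iter_getD h]
  · have e : i + s = (i + s % q^k) + q^k * (s / q^k) := by
      have := Nat.mod_add_div s (q^k); omega
    have e1 : (i + s) / q^k = (i + s % q^k)/q^k + s / q^k := by
      conv_lhs => rw [e]
      rw [Nat.add_mul_div_left _ _ hqk]
    have e2 : (i + s) % q^k = (i + s % q^k) % q^k := by simp
    rw [e1, e2]
  · rw [iter_length h]
    simp [← pow_add]; omega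

lemma W_deg (hq : 0 < q) (g : Bool → Bool) (hg : ∀ b, ∀ t < q, (ζ b).getD t false = g b)
    (k : ℕ) (b : Bool) (i : ℕ) (hi : i < q^k) : W ζ q k b i = g^[k] b := by
  induction k generalizing b i with
  | zero => rfl
  | succ k ih =>
    have hqk : 0 < q^k := by positivity
    rw [W, ih _ _ (Nat.mod_lt _ hqk), hg _ _ (by
      rw [Nat.div_lt_iff_lt_mul hqk, mul_comm, ← pow_succ]; exact hi), Function.iterate_succ_apply]

lemma const_of_deg (h : IsConstLenSubst ζ q) {y : ℕ → Bool} (hy : y ∈ SubstShift ζ)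
    (g : Bool → Bool) (hg : ∀ b, ∀ t < q, (ζ b).getD t false = g b) (i : ℕ) : y i = y 0 := by
  have hq : 0 < q := by have := h.1; omega
  obtain ⟨K, a, s, h1, h2⟩ := base h hy (i+1)
  have key : ∀ j < i + 1, y j = g^[K] a := by
    intro j hj
    rw [h2 j hj, iter_getD h _ _ _ (by simp; omega), W_deg hq g hg _ _ _ (Nat.mod_lt _ (by positivity)),
      Nat.div_eq_of_lt (by omega)]
    rfl
  rw [key i (by omega), key 0 (by omega)]

end words

section freq
variable {w : ℕ}

def wnd (w : ℕ) (g : ℕ → Bool) (i : ℕ) : Fin w → Bool := fun h => g (i + h)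

noncomputable def F (u : Fin w → Bool) (g : ℕ → Bool) (n : ℕ) : ℝ :=
  ∑ i ∈ Finset.range n, if wnd w g i = u then (1:ℝ) else 0

lemma F_nonneg (u : Fin w → Bool) (g) (n) : 0 ≤ F u g n :=
  Finset.sum_nonneg fun i _ => by split_ifs <;> norm_num

lemma F_le (u : Fin w → Bool) (g) (n : ℕ) : F u g n ≤ n := by
  have : F u g n ≤ ∑ i ∈ Finset.range n, (1:ℝ) :=
    Finset.sum_le_sum fun i _ => by split_ifs <;> norm_num
  simpa using this

lemma F_add (u : Fin w → Bool) (g) (a b : ℕ) :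
    F u g (a + b) = F u g a + F u (fun i => g (a + i)) b := by
  unfold F
  rw [Finset.sum_range_add]
  congr 1
  refine Finset.sum_congr rfl fun i _ => ?_
  have : wnd w g (a + i) = wnd w (fun i => g (a + i)) i := by
    funext t; simp [wnd, add_assoc]
  rw [this]

lemma F_close (u : Fin w → Bool) (g g' : ℕ → Bool) (L : ℕ) (h : ∀ i < L, g i = g' i) :
    |F u g L - F u g' L| ≤ w := by
  unfold F
  rw [← Finset.sum_sub_distrib]
  refine (Finset.abs_sum_le_sum_abs _ _).trans ?_
  have : ∀ i ∈ Finset.range L, |(if wnd w g i = u then (1:ℝ) else 0) -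
      (if wnd w g' i = u then (1:ℝ) else 0)| ≤ if i ∈ Finset.Ico (L - w) L then (1:ℝ) else 0 := by
    intro i hi
    rw [Finset.mem_range] at hi
    by_cases hL : i + w ≤ L
    · have : wnd w g i = wnd w g' i := by
        funext t; exact h _ (by have := t.2; omega)
      rw [this, sub_self, abs_zero]; split_ifs <;> norm_num
    · rw [if_pos (show i ∈ Finset.Ico (L - w) L by rw [Finset.mem_Ico]; omega)]
      split_ifs <;> norm_num
  refine (Finset.sum_le_sum this).trans ?_
  rw [← Finset.sum_filter, Finset.sum_const, nsmul_eq_mul, mul_one]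
  norm_cast
  refine (Finset.card_le_card (t := Finset.Ico (L-w) L) ?_).trans ?_
  · intro i; simp
  · simp; omega

lemma F_block (u : Fin w → Bool) (B : Bool → ℕ → Bool) (L : ℕ) (g : ℕ → Bool) (z : ℕ → Bool)
    (r : ℕ) (h : ∀ t < r, ∀ i < L, g (t * L + i) = B (z t) i) :
    |F u g (r * L) - ∑ t ∈ Finset.range r, F u (B (z t)) L| ≤ r * w := by
  induction r with
  | zero => simp [F]
  | succ r ih =>
    have h1 := ih (fun t ht => h t (by omega))
    have h2 := F_close u (fun i => g (r * L + i)) (B (z r)) L (h r (by omega))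
    rw [Nat.succ_mul, F_add, Finset.sum_range_succ]
    push_cast
    rw [abs_le] at *
    constructor <;> linarith

end freq
lemma two_seq (a b : ℕ → ℝ) (e0 e1 c r : ℝ) (hr0 : 0 ≤ r) (hr1 : r < 1)
    (he0 : |e0| ≤ 1) (he : |e1 - e0| < 1)
    (ha : ∀ k, |a (k+1) - (a k + e0 * (b k - a k))| ≤ c * r^k)
    (hb : ∀ k, |b (k+1) - (a k + e1 * (b k - a k))| ≤ c * r^k) :
    ∃ f, Tendsto a atTop (𝓝 f) ∧ Tendsto b atTop (𝓝 f) := by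
  set d : ℕ → ℝ := fun k => b k - a k with hd
  set lam := |e1 - e0| with hlam
  have hd1 : ∀ k, |d (k+1)| ≤ lam * |d k| + 2 * (c * r^k) := by
    intro k
    have h1 := ha k
    have h2 := hb k
    have : d (k+1) = (e1 - e0) * d k + (b (k+1) - (a k + e1 * (b k - a k)))
        - (a (k+1) - (a k + e0 * (b k - a k))) := by simp only [hd]; ring
    rw [this]
    refine (abs_sub _ _).trans ?_
    refine (add_le_add_left (abs_add_le _ _) _).trans ?_
    rw [abs_mul]; linarith
  have hs : Summable (fun k => c * r^k) := (summable_geometric_of_lt_one hr0 hr1).mul_left c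
  have hc : ∀ k, 0 ≤ c * r^k := fun k => (abs_nonneg _).trans (ha k)
  have hds : Summable (fun k => |d k|) := by
    set T := ∑' k, c * r^k with hT
    refine summable_of_sum_range_le (c := (|d 0| + 2 * T) / (1 - lam)) (fun k => abs_nonneg _) ?_
    intro n
    rw [le_div_iff₀ (by linarith)]
    have h1 : ∑ i ∈ Finset.range n, |d i| ≤ |d 0| + lam * ∑ i ∈ Finset.range n, |d i| + 2 * T := by
      have h2 : ∑ i ∈ Finset.range n, |d i| ≤ ∑ i ∈ Finset.range (n+1), |d i| :=
        Finset.sum_le_sum_of_subset_of_nonneg (by simp) (fun i _ _ => abs_nonneg _)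
      rw [Finset.sum_range_succ'] at h2
      have h3 : ∑ k ∈ Finset.range n, |d (k+1)| ≤
          ∑ k ∈ Finset.range n, (lam * |d k| + 2 * (c * r^k)) :=
        Finset.sum_le_sum fun k _ => hd1 k
      rw [Finset.sum_add_distrib, ← Finset.mul_sum, ← Finset.mul_sum] at h3
      have h4 : ∑ k ∈ Finset.range n, c * r^k ≤ T := hs.sum_le_tsum _ (fun i _ => hc i)
      linarith
    linarith
  have hda : Tendsto d atTop (𝓝 0) := by
    have := hds.tendsto_atTop_zero
    exact (tendsto_zero_iff_abs_tendsto_zero _).2 this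
  have hca : CauchySeq a := by
    refine cauchySeq_of_dist_le_of_summable (fun k => |d k| + c * r^k) ?_ (hds.add hs)
    intro k
    rw [dist_comm, Real.dist_eq]
    have : a (k+1) - a k = e0 * d k + (a (k+1) - (a k + e0 * (b k - a k))) := by
      simp only [hd]; ring
    show |a (k+1) - a k| ≤ _
    rw [this]
    refine (abs_add_le _ _).trans (add_le_add ?_ (ha k))
    rw [abs_mul]
    nlinarith [abs_nonneg (d k)]
  obtain ⟨f, hf⟩ := cauchySeq_tendsto_of_complete hca
  refine ⟨f, hf, ?_⟩
  have := hf.add hda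
  simpa [hd] using this

section freq2
variable {ζ : Bool → List Bool} {q : ℕ} {w : ℕ}

noncomputable def al (ζ : Bool → List Bool) (q : ℕ) (u : Fin w → Bool) (b : Bool) (k : ℕ) : ℝ :=
  F u (W ζ q k b) (q^k) / (q:ℝ)^k

noncomputable def ee (ζ : Bool → List Bool) (q : ℕ) (b : Bool) : ℝ :=
  (((Finset.range q).filter (fun t => (ζ b).getD t false = true)).card : ℝ) / q

lemma al_rec (hq : 0 < q) (u : Fin w → Bool) (b : Bool) (k : ℕ) :
    |al ζ q u b (k+1) - (al ζ q u false k + ee ζ q b * (al ζ q u true k - al ζ q u false k))|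
      ≤ w * ((1:ℝ)/q)^k := by
  have hqr : (0:ℝ) < q := by exact_mod_cast hq
  have hqk : 0 < q^k := by positivity
  have h := F_block u (W ζ q k) (q^k) (W ζ q (k+1) b) (fun t => (ζ b).getD t false) q (by
    intro t ht i hi
    rw [W]
    congr 1
    · rw [add_comm, Nat.add_mul_div_right _ _ hqk, Nat.div_eq_of_lt hi, zero_add]
    · rw [add_comm, Nat.add_mul_mod_self_right, Nat.mod_eq_of_lt hi])
  have hs : ∑ t ∈ Finset.range q, F u (W ζ q k ((ζ b).getD t false)) (q^k) =
      (q:ℝ)^(k+1) * (al ζ q u false k + ee ζ q b * (al ζ q u true k - al ζ q u false k)) := by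
    have : ∀ t ∈ Finset.range q, F u (W ζ q k ((ζ b).getD t false)) (q^k) =
        F u (W ζ q k false) (q^k) + (if (ζ b).getD t false = true then 1 else 0) *
          (F u (W ζ q k true) (q^k) - F u (W ζ q k false) (q^k)) := by
      intro t _
      cases (ζ b).getD t false <;> simp
    rw [Finset.sum_congr rfl this, Finset.sum_add_distrib, ← Finset.sum_mul, Finset.sum_boole]
    simp only [al, ee, Finset.sum_const, Finset.card_range, nsmul_eq_mul, pow_succ]
    field_simp
  rw [hs] at h
  have e : F u (W ζ q (k+1) b) (q * q^k) = (q:ℝ)^(k+1) * al ζ q u b (k+1) := by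
    rw [al, ← pow_succ']; field_simp
  rw [e, ← mul_sub, abs_mul, abs_of_pos (by positivity : (0:ℝ) < (q:ℝ)^(k+1))] at h
  rw [one_div, inv_pow, ← div_eq_mul_inv, le_div_iff₀ (by positivity)]
  rw [pow_succ] at h
  refine le_of_mul_le_mul_left (a := (q:ℝ)) ?_ hqr
  linarith

lemma ee_nonneg (b) : 0 ≤ ee ζ q b := by unfold ee; positivity

lemma ee_le (hq : 0 < q) (b) : ee ζ q b ≤ 1 := by
  unfold ee
  rw [div_le_one (by exact_mod_cast hq)]
  have := Finset.card_filter_le (Finset.range q) (fun t => (ζ b).getD t false = true)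
  rw [Finset.card_range] at this
  exact_mod_cast this

lemma ee_zero (hq : 0 < q) (b) (h : ee ζ q b = 0) : ∀ t < q, (ζ b).getD t false = false := by
  have hqr : (q:ℝ) ≠ 0 := by exact_mod_cast hq.ne'
  unfold ee at h
  rw [div_eq_zero_iff, or_iff_left hqr, Nat.cast_eq_zero, Finset.card_eq_zero,
    Finset.filter_eq_empty_iff] at h
  intro t ht
  simpa using h (Finset.mem_range.2 ht)

lemma ee_one (hq : 0 < q) (b) (h : ee ζ q b = 1) : ∀ t < q, (ζ b).getD t false = true := by
  have hqr : (q:ℝ) ≠ 0 := by exact_mod_cast hq.ne'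
  unfold ee at h
  rw [div_eq_one_iff_eq hqr, Nat.cast_inj] at h
  intro t ht
  have := Finset.card_filter_eq_iff.1 (h.trans (Finset.card_range q).symm)
  exact this t (Finset.mem_range.2 ht)

lemma F_approx (h : IsConstLenSubst ζ q) {y : ℕ → Bool} (hy : y ∈ SubstShift ζ)
    (u : Fin w → Bool) (f δ : ℝ) (hf0 : 0 ≤ f) (hf1 : f ≤ 1) (k : ℕ)
    (hδ : ∀ b, |al ζ q u b k - f| ≤ δ) (n : ℕ) :
    |F u y n - n * f| ≤ 2 * (q:ℝ)^k + n * (w / (q:ℝ)^k + δ) := by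
  have hq : 0 < q := by have := h.1; omega
  have hqr : (0:ℝ) < q := by exact_mod_cast hq
  have hqk : 0 < q^k := by positivity
  have hδ0 : 0 ≤ δ := (abs_nonneg _).trans (hδ true)
  by_cases hn : n < q^k
  · have h1 := F_nonneg u y n
    have h2 := F_le u y n
    have h3 : (n:ℝ) < (q:ℝ)^k := by exact_mod_cast hn
    have h4 : 0 ≤ n * (w / (q:ℝ)^k + δ) := by positivity
    have h5 : 0 ≤ (n:ℝ) * f := by positivity
    have h6 : (n:ℝ) * f ≤ n := mul_le_of_le_one_right (by positivity) hf1
    rw [abs_le]; constructor <;> linarith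
  push Not at hn
  obtain ⟨s, z, hs, hz⟩ := decomp h hy k n
  obtain ⟨c, hcs⟩ : ∃ c, c + s = q^k := ⟨q^k - s, by omega⟩
  obtain ⟨r, e, hel, hne⟩ : ∃ r e, e < q^k ∧ n = c + (r * q^k + e) := by
    refine ⟨(n - c) / q^k, (n - c) % q^k, Nat.mod_lt _ hqk, ?_⟩
    have := Nat.div_add_mod (n - c) (q^k)
    rw [mul_comm] at this
    omega
  have hb := F_block u (W ζ q k) (q^k) (fun i => y (c + i)) (fun t => z (t + 1)) r (by
    intro t ht i hi
    have h1 : t * q^k + q^k ≤ r * q^k := by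
      rw [← Nat.succ_mul]; exact Nat.mul_le_mul_right _ ht
    show y (c + (t * q^k + i)) = _
    rw [hz _ (by omega)]
    have : c + (t * q^k + i) + s = i + (t+1) * q^k := by rw [add_mul, one_mul]; omega
    rw [this, Nat.add_mul_div_right _ _ hqk, Nat.div_eq_of_lt hi, zero_add,
      Nat.add_mul_mod_self_right, Nat.mod_eq_of_lt hi])
  have hsum : |∑ t ∈ Finset.range r, F u (W ζ q k (z (t+1))) (q^k) - r * ((q:ℝ)^k * f)|
      ≤ r * ((q:ℝ)^k * δ) := by
    have : ∑ t ∈ Finset.range r, F u (W ζ q k (z (t+1))) (q^k) - r * ((q:ℝ)^k * f) =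
      ∑ t ∈ Finset.range r, (q:ℝ)^k * (al ζ q u (z (t+1)) k - f) := by
      have e : ∀ t, (q:ℝ)^k * (al ζ q u (z (t+1)) k - f) =
          F u (W ζ q k (z (t+1))) (q^k) - (q:ℝ)^k * f := by
        intro t; rw [al]; field_simp
      simp only [e, Finset.sum_sub_distrib, Finset.sum_const, Finset.card_range, nsmul_eq_mul]
    rw [this]
    refine (Finset.abs_sum_le_sum_abs _ _).trans ?_
    have : ∀ t ∈ Finset.range r, |(q:ℝ)^k * (al ζ q u (z (t+1)) k - f)| ≤ (q:ℝ)^k * δ := by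
      intro t _
      rw [abs_mul, abs_of_pos (by positivity : (0:ℝ) < (q:ℝ)^k)]
      exact mul_le_mul_of_nonneg_left (hδ _) (by positivity)
    refine (Finset.sum_le_sum this).trans ?_
    simp
  have hF : F u y n = F u y c + F u (fun i => y (c + i)) (r * q^k)
      + F u (fun i => y (c + (r * q^k + i))) e := by
    conv_lhs => rw [hne]
    rw [F_add, F_add, add_assoc]
  have a1 := F_nonneg u y c
  have a2 := F_le u y c
  have a3 := F_nonneg u (fun i => y (c + (r * q^k + i))) e
  have a4 := F_le u (fun i => y (c + (r * q^k + i))) e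
  have hcr : (c:ℝ) ≤ (q:ℝ)^k := by
    have : c ≤ q^k := by omega
    exact_mod_cast this
  have her : (e:ℝ) ≤ (q:ℝ)^k := by exact_mod_cast hel.le
  have hnr : (n:ℝ) = c + (r * (q:ℝ)^k + e) := by exact_mod_cast hne
  have hrn : (r:ℝ) * (q:ℝ)^k ≤ n := by
    have : 0 ≤ (c:ℝ) := by positivity
    have : 0 ≤ (e:ℝ) := by positivity
    linarith
  have b1 : (r:ℝ) * w ≤ n * (w / (q:ℝ)^k) := by
    rw [← mul_div_assoc, le_div_iff₀ (by positivity)]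
    have : 0 ≤ (w:ℝ) := by positivity
    nlinarith
  have b2 : (r:ℝ) * ((q:ℝ)^k * δ) ≤ n * δ := by nlinarith
  have c1 : 0 ≤ (c:ℝ) * f := by positivity
  have c2 : (c:ℝ) * f ≤ c := mul_le_of_le_one_right (by positivity) hf1
  have c3 : 0 ≤ (e:ℝ) * f := by positivity
  have c4 : (e:ℝ) * f ≤ e := mul_le_of_le_one_right (by positivity) hf1
  have d1 : (n:ℝ) * f = c * f + r * ((q:ℝ)^k * f) + e * f := by rw [hnr]; ring
  rw [hF, d1]
  rw [abs_le] at *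
  constructor <;> nlinarith

lemma freq_exists (h : IsConstLenSubst ζ q) {y : ℕ → Bool} (hy : y ∈ SubstShift ζ)
    (u : Fin w → Bool) : ∃ f, Tendsto (fun n : ℕ => F u y n / n) atTop (𝓝 f) := by
  have hq : 0 < q := by have := h.1; omega
  have hq1 : (1:ℝ) < q := by have := h.1; exact_mod_cast this
  have hqr : (0:ℝ) < q := by linarith
  have e00 := ee_nonneg (ζ := ζ) (q := q) false
  have e01 := ee_le (ζ := ζ) hq false
  have e10 := ee_nonneg (ζ := ζ) (q := q) true
  have e11 := ee_le (ζ := ζ) hq true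
  by_cases hdeg : |ee ζ q true - ee ζ q false| < 1
  · obtain ⟨f, h0, h1⟩ := two_seq (al ζ q u false) (al ζ q u true) (ee ζ q false) (ee ζ q true)
      w (1/q) (by positivity) (by rw [div_lt_one hqr]; exact hq1)
      (by rw [abs_le]; constructor <;> linarith) hdeg (al_rec hq u false) (al_rec hq u true)
    have hal : ∀ k, 0 ≤ al ζ q u false k ∧ al ζ q u false k ≤ 1 := by
      intro k
      have := F_le u (W ζ q k false) (q^k)
      have h' := F_nonneg u (W ζ q k false) (q^k)
      push_cast at this
      unfold al
      exact ⟨by positivity, by rw [div_le_one (by positivity)]; exact this⟩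
    have hf0 : 0 ≤ f := ge_of_tendsto' h0 fun k => (hal k).1
    have hf1 : f ≤ 1 := le_of_tendsto' h0 fun k => (hal k).2
    refine ⟨f, ?_⟩
    rw [Metric.tendsto_atTop]
    intro ε hε
    have hw : Tendsto (fun k : ℕ => (w:ℝ) / (q:ℝ)^k) atTop (𝓝 0) :=
      tendsto_const_nhds.div_atTop (tendsto_pow_atTop_atTop_of_one_lt hq1)
    obtain ⟨k, k0, k1, k2⟩ := ((Metric.tendsto_nhds.1 h0 (ε/4) (by positivity)).and
      ((Metric.tendsto_nhds.1 h1 (ε/4) (by positivity)).and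
      (Metric.tendsto_nhds.1 hw (ε/4) (by positivity)))).exists
    rw [Real.dist_eq] at k0 k1 k2
    rw [sub_zero, abs_of_nonneg (by positivity)] at k2
    have key := F_approx h hy u f (ε/4) hf0 hf1 k (by
      intro b; cases b
      · exact k0.le
      · exact k1.le)
    have ht : Tendsto (fun n : ℕ => (2 * (q:ℝ)^k) / n) atTop (𝓝 0) :=
      tendsto_const_nhds.div_atTop tendsto_natCast_atTop_atTop
    obtain ⟨N, hN⟩ := eventually_atTop.1 (Metric.tendsto_nhds.1 ht (ε/4) (by positivity))
    refine ⟨N + 1, fun n hn => ?_⟩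
    have hn0 : (0:ℝ) < n := by exact_mod_cast (by omega : 0 < n)
    have := hN n (by omega)
    rw [Real.dist_eq, sub_zero, abs_of_nonneg (by positivity), div_lt_iff₀ hn0] at this
    rw [Real.dist_eq]
    have e : F u y n / n - f = (F u y n - n * f) / n := by field_simp
    rw [e, abs_div, abs_of_pos hn0, div_lt_iff₀ hn0]
    nlinarith [key n]
  · have hconst : ∃ g : Bool → Bool, ∀ b, ∀ t < q, (ζ b).getD t false = g b := by
      rw [not_lt, le_abs] at hdeg
      rcases hdeg with hd | hd
      · refine ⟨fun b => b, fun b => ?_⟩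
        cases b
        · exact ee_zero hq false (by linarith)
        · exact ee_one hq true (by linarith)
      · refine ⟨fun b => !b, fun b => ?_⟩
        cases b
        · exact ee_one hq false (by linarith)
        · exact ee_zero hq true (by linarith)
    obtain ⟨g, hg⟩ := hconst
    have hy0 := const_of_deg h hy g hg
    refine ⟨if wnd w y 0 = u then 1 else 0, ?_⟩
    refine tendsto_const_nhds.congr' ?_
    filter_upwards [eventually_gt_atTop 0] with n hn
    have hn0 : (n:ℝ) ≠ 0 := by exact_mod_cast hn.ne'
    have : ∀ i, wnd w y i = wnd w y 0 := by
      intro i; funext t; simp only [wnd]; rw [hy0, hy0 (0 + t)]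
    unfold F
    simp only [this, Finset.sum_const, Finset.card_range, nsmul_eq_mul]
    field_simp

end freq2
section pairs

def pairs {T : Type*} [DecidableEq T] (φ : ℕ → T) (n : ℕ) : Finset (ℕ × ℕ) :=
  (Finset.range n ×ˢ Finset.range n).filter (fun p => φ p.1 = φ p.2)

lemma pairs_card {T : Type*} [DecidableEq T] [Fintype T] (φ : ℕ → T) (n : ℕ) :
    ((pairs φ n).card : ℝ) = ∑ c : T, (∑ i ∈ Finset.range n, if φ i = c then (1:ℝ) else 0)^2 := by
  have h1 : ((pairs φ n).card : ℝ) = ∑ i ∈ Finset.range n, ∑ j ∈ Finset.range n,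
      if φ i = φ j then (1:ℝ) else 0 := by
    rw [pairs, Finset.card_filter]
    push_cast
    rw [Finset.sum_product]
  rw [h1]
  simp only [sq, Finset.sum_mul_sum]
  rw [Finset.sum_comm]
  rw [Finset.sum_comm (s := Finset.univ)]
  rw [Finset.sum_comm]
  refine Finset.sum_congr rfl fun i _ => ?_
  rw [Finset.sum_comm (s := Finset.univ)]
  refine Finset.sum_congr rfl fun j _ => ?_
  rw [Finset.sum_eq_single (φ i)]
  · simp [eq_comm]
  · intro c _ hc
    simp [Ne.symm hc]
  · simp

lemma pairs_card_ge {T : Type*} [DecidableEq T] [Fintype T] (φ : ℕ → T) (n : ℕ) :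
    (n:ℝ)^2 ≤ Fintype.card T * (pairs φ n).card := by
  rw [pairs_card]
  have h := sq_sum_le_card_mul_sum_sq (s := (Finset.univ : Finset T))
    (f := fun c => ∑ i ∈ Finset.range n, if φ i = c then (1:ℝ) else 0)
  rw [Finset.sum_comm] at h
  simpa using h

variable {ζ : Bool → List Bool} {q : ℕ}

lemma pairs_lim (h : IsConstLenSubst ζ q) {y : ℕ → Bool} (hy : y ∈ SubstShift ζ) (w : ℕ) :
    ∃ c, Tendsto (fun n : ℕ => ((pairs (wnd w y) n).card : ℝ) / (n:ℝ)^2) atTop (𝓝 c) := by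
  choose f hf using fun u : Fin w → Bool => freq_exists h hy u
  refine ⟨∑ u, f u ^ 2, ?_⟩
  have := tendsto_finsetSum (Finset.univ) (fun u _ => (hf u).pow 2)
  refine this.congr fun n => ?_
  rw [pairs_card, Finset.sum_div]
  refine Finset.sum_congr rfl fun u _ => ?_
  rw [div_pow]; rfl

lemma pairs_lower (h : IsConstLenSubst ζ q) {y : ℕ → Bool} (hy : y ∈ SubstShift ζ) (w : ℕ)
    (hw : 1 ≤ w) (n : ℕ) :
    (n:ℝ)^2 ≤ (4 * q * w) * (pairs (wnd w y) n).card := by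
  have hq : 0 < q := by have := h.1; omega
  obtain ⟨k, hk1, hk2⟩ : ∃ k, w ≤ q^k ∧ q^k ≤ q * w := by
    refine ⟨Nat.log q w + 1, (Nat.lt_pow_succ_log_self h.1 w).le, ?_⟩
    rw [pow_succ, mul_comm]
    exact Nat.mul_le_mul_left _ (Nat.pow_log_le_self q (by omega))
  have hqk : 0 < q^k := by positivity
  obtain ⟨s, z, hs, hz⟩ := decomp h hy k (n + w)
  let φ : ℕ → Bool × Bool × Fin (q^k) := fun i =>
    (z ((i+s)/q^k), z ((i+s)/q^k+1), ⟨(i+s) % q^k, Nat.mod_lt _ hqk⟩)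
  have hval : ∀ i < n, ∀ t < w, y (i + t) = if (i+s)%q^k + t < q^k
      then W ζ q k (z ((i+s)/q^k)) ((i+s)%q^k + t)
      else W ζ q k (z ((i+s)/q^k+1)) ((i+s)%q^k + t - q^k) := by
    intro i hi t ht
    rw [hz _ (by omega)]
    have e : i + t + s = ((i+s)%q^k + t) + q^k * ((i+s)/q^k) := by
      have := Nat.mod_add_div (i+s) (q^k); omega
    have hl := Nat.mod_lt (i+s) hqk
    split_ifs with hc
    · rw [e, Nat.add_mul_div_left _ _ hqk, Nat.add_mul_mod_self_left, Nat.div_eq_of_lt hc,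
        Nat.mod_eq_of_lt hc, zero_add]
    · obtain ⟨x, hx⟩ := Nat.exists_eq_add_of_le (not_lt.1 hc)
      have hxl : x < q^k := by omega
      rw [e, hx, Nat.add_mul_div_left _ _ hqk, Nat.add_mul_mod_self_left, Nat.add_div_left _ hqk,
        Nat.add_mod_left, Nat.div_eq_of_lt hxl, Nat.mod_eq_of_lt hxl, Nat.add_sub_cancel_left,
        add_comm (Nat.succ 0)]
  have hsub : pairs φ n ⊆ pairs (wnd w y) n := by
    intro p hp
    simp only [pairs, Finset.mem_filter, Finset.mem_product, Finset.mem_range, φ, Prod.mk.injEq,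
      Fin.mk.injEq] at hp ⊢
    obtain ⟨⟨h1, h2⟩, h3, h4, h5⟩ := hp
    refine ⟨⟨h1, h2⟩, ?_⟩
    funext t
    simp only [wnd]
    rw [hval _ h1 _ t.2, hval _ h2 _ t.2, h3, h4, h5]
  have h1 := pairs_card_ge φ n
  have h2 : ((pairs φ n).card : ℝ) ≤ (pairs (wnd w y) n).card := by
    exact_mod_cast Finset.card_le_card hsub
  have h3 : ((Fintype.card (Bool × Bool × Fin (q^k)) : ℕ) : ℝ) ≤ 4 * q * w := by
    have : Fintype.card (Bool × Bool × Fin (q^k)) ≤ 4 * q * w := by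
      simp only [Fintype.card_prod, Fintype.card_bool, Fintype.card_fin]; nlinarith
    exact_mod_cast this
  refine h1.trans ?_
  gcongr

end pairs

section lines

def AA (R : ℕ → ℕ → Prop) (n l : ℕ) : Set (ℕ × ℕ) :=
  {p | p.1 ≠ p.2 ∧ p.1 + l ≤ n ∧ p.2 + l ≤ n ∧ ∀ h < l, R (p.1 + h) (p.2 + h)}

lemma AA_fin (R) (n l : ℕ) : (AA R n l).Finite := by
  refine Set.Finite.subset (Finset.finite_toSet (Finset.range (n+1) ×ˢ Finset.range (n+1))) ?_
  rintro ⟨i, j⟩ ⟨-, h1, h2, -⟩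
  simp at h1 h2 ⊢
  omega

def sh (p : ℕ × ℕ) : ℕ × ℕ := (p.1 + 1, p.2 + 1)

lemma sh_inj : Function.Injective sh := by
  rintro ⟨a, b⟩ ⟨c, d⟩ h
  simp [sh] at h ⊢; omega

lemma AA_sub1 (R) (n l : ℕ) : AA R n (l+1) ⊆ AA R n l := by
  rintro ⟨i, j⟩ ⟨h0, h1, h2, h3⟩
  refine ⟨h0, ?_, ?_, fun h hh => h3 h (by omega)⟩ <;> simp at * <;> omega

lemma AA_sub2 (R) (n l : ℕ) : sh '' AA R n (l+1) ⊆ AA R n l := by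
  rintro _ ⟨⟨i, j⟩, ⟨h0, h1, h2, h3⟩, rfl⟩
  refine ⟨?_, ?_, ?_, fun h hh => ?_⟩
  · simp [sh] at *; omega
  · simp [sh] at *; omega
  · simp [sh] at *; omega
  · have := h3 (h+1) (by omega)
    simp only [sh]
    rw [add_right_comm i, add_right_comm j]; exact this

lemma AA_inter (R) (n l : ℕ) : AA R n (l+1) ∩ sh '' AA R n (l+1) = sh '' AA R n (l+2) := by
  apply Set.Subset.antisymm
  · rintro _ ⟨⟨h0, h1, h2, h3⟩, ⟨⟨i, j⟩, ⟨g0, g1, g2, g3⟩, rfl⟩⟩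
    refine ⟨(i, j), ⟨g0, ?_, ?_, fun h hh => ?_⟩, rfl⟩
    · simp [sh] at *; omega
    · simp [sh] at *; omega
    · rcases h with _ | h
      · exact g3 0 (by omega)
      · have := h3 h (by omega)
        simp only [sh] at this
        rw [add_right_comm i, add_right_comm j] at this; exact this
  · intro p hp
    exact ⟨AA_sub2 R n (l+1) hp, Set.image_mono (AA_sub1 R n (l+1)) hp⟩

lemma lines_eq {X : Type*} (d : X → X → ℝ) (f : X → X) (x : X) (n : ℕ) (ε : ℝ) (l : ℕ)
    (hl : 1 ≤ l) : {p : ℕ × ℕ | IsLine d f x n ε p.1 p.2 l} =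
      AA (RPone d f x ε) n l \ (AA (RPone d f x ε) n (l+1) ∪ sh '' AA (RPone d f x ε) n (l+1)) := by
  set R := RPone d f x ε with hR
  ext ⟨i, j⟩
  constructor
  · rintro ⟨-, h1, h2, h3, h4, h5, h6⟩
    refine ⟨⟨h3, h1, h2, h4⟩, ?_⟩
    rintro (⟨-, g1, g2, g3⟩ | ⟨⟨i', j'⟩, ⟨-, g1, g2, g3⟩, e⟩)
    · exact h6 (by simp at *; omega) (g3 l (by omega))
    · simp only [sh, Prod.mk.injEq] at e
      obtain ⟨rfl, rfl⟩ := e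
      exact h5 (by simp) (by simp) (g3 0 (by omega))
  · rintro ⟨⟨h0, h1, h2, h3⟩, h4⟩
    refine ⟨hl, h1, h2, h0, h3, ?_, ?_⟩
    · intro hi hj hr
      apply h4; right
      refine ⟨(i-1, j-1), ⟨?_, ?_, ?_, ?_⟩, ?_⟩
      · simp at *; omega
      · simp at *; omega
      · simp at *; omega
      · intro h hh
        rcases h with _ | h
        · exact hr
        · have := h3 h (by omega)
          simp only at *
          rw [show i - 1 + (h+1) = i + h by omega, show j - 1 + (h+1) = j + h by omega]; exact this
      · simp [sh] at *; omega
    · intro hm hr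
      apply h4; left
      refine ⟨h0, ?_, ?_, ?_⟩
      · simp at *; omega
      · simp at *; omega
      · intro h hh
        rcases Nat.lt_succ_iff_lt_or_eq.1 hh with hh | rfl
        · exact h3 h hh
        · exact hr

noncomputable def QQ (R : ℕ → ℕ → Prop) (n l : ℕ) : ℝ := ((AA R n l).ncard : ℝ)

lemma diff_card (R) (n l : ℕ) :
    ((AA R n l \ (AA R n (l+1) ∪ sh '' AA R n (l+1))).ncard : ℝ) =
      QQ R n l - 2 * QQ R n (l+1) + QQ R n (l+2) := by
  have f1 := AA_fin R n (l+1)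
  have f2 : (sh '' AA R n (l+1)).Finite := f1.image _
  have h1 := Set.ncard_sdiff_add_ncard_of_subset
    (Set.union_subset (AA_sub1 R n l) (AA_sub2 R n l)) (AA_fin R n l)
  have h2 := Set.ncard_union_add_ncard_inter (AA R n (l+1)) (sh '' AA R n (l+1)) f1 f2
  rw [AA_inter, Set.ncard_image_of_injective _ sh_inj, Set.ncard_image_of_injective _ sh_inj] at h2
  unfold QQ
  have h1' : _ = ((AA R n l).ncard : ℝ) := congrArg (Nat.cast (R := ℝ)) h1
  have h2' := congrArg (Nat.cast (R := ℝ)) h2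
  push_cast at h1' h2'
  linarith

lemma convexQ (R) (n l : ℕ) : 0 ≤ QQ R n l - 2 * QQ R n (l+1) + QQ R n (l+2) := by
  rw [← diff_card]; positivity

lemma QQ_zero (R) (n l : ℕ) (h : n < l) : QQ R n l = 0 := by
  have : AA R n l = ∅ := by
    ext ⟨i, j⟩
    simp only [AA, Set.mem_ofPred_eq, Set.mem_empty_iff_false, iff_false]
    rintro ⟨-, h1, -⟩
    omega
  rw [QQ, this]; simp

lemma RRate_eq {X : Type*} (d : X → X → ℝ) (f : X → X) (x : X) (n : ℕ) (ε : ℝ) (ℓ : ℕ)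
    (hl : 1 ≤ ℓ) : RRate d f x n ε ℓ =
      (ℓ * QQ (RPone d f x ε) n ℓ - (ℓ - 1) * QQ (RPone d f x ε) n (ℓ+1)) / ((n:ℝ)^2 - n) := by
  set R := RPone d f x ε with hR
  set G : ℕ → ℝ := fun k => (((ℓ + k : ℕ) : ℝ) * QQ R n (ℓ+k) -
    (((ℓ + k : ℕ) : ℝ) - 1) * QQ R n (ℓ+k+1)) / ((n:ℝ)^2 - n) with hG
  have hterm : ∀ k, ((ℓ + k : ℕ) : ℝ) * Pline d f x n ε (ℓ + k) = G k - G (k+1) := by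
    intro k
    rw [Pline, Nlines, lines_eq d f x n ε (ℓ+k) (by omega), diff_card]
    simp only [hG, ← add_assoc]
    push_cast
    ring
  unfold RRate
  rw [tsum_congr hterm, tsum_eq_sum (s := Finset.range (n+1)), Finset.sum_range_sub']
  · have : G (n+1) = 0 := by
      simp only [hG]
      rw [QQ_zero _ _ _ (by omega), QQ_zero _ _ _ (by omega)]; simp
    rw [this, sub_zero]
    simp [hG]
  · intro k hk
    rw [Finset.mem_range, not_lt] at hk
    simp only [hG]
    rw [QQ_zero _ _ _ (by omega), QQ_zero _ _ _ (by omega), QQ_zero _ _ _ (by omega),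
      QQ_zero _ _ _ (by omega)]; simp

def Agr (y : ℕ → Bool) (w i j : ℕ) : Prop := ∀ h < w, y (i + h) = y (j + h)

lemma wnd_eq_iff (y : ℕ → Bool) (w i j : ℕ) : wnd w y i = wnd w y j ↔ Agr y w i j := by
  constructor
  · intro h t ht
    exact congrFun h ⟨t, ht⟩
  · intro h; funext t; exact h t t.2

lemma QQ_eq (y : ℕ → Bool) (w l N : ℕ) (hw : 1 ≤ w) (hl : 1 ≤ l) :
    QQ (Agr y w) (N + l) (l) + (N+1) = (pairs (wnd (w+l-1) y) (N+1)).card := by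
  have h : (AA (Agr y w) (N+l) l) ∪ ((Finset.range (N+1)).image (fun i => (i,i)) : Finset (ℕ × ℕ))
      = (pairs (wnd (w+l-1) y) (N+1) : Set (ℕ × ℕ)) := by
    ext ⟨i, j⟩
    simp only [AA, pairs, Set.mem_union, Set.mem_ofPred_eq, Finset.coe_image, Set.mem_image,
      Finset.coe_range, Set.mem_Iio, Prod.mk.injEq, Finset.coe_filter, Finset.mem_product,
      Finset.mem_range, wnd_eq_iff]
    constructor
    · rintro (⟨h1, h2, h3, h4⟩ | ⟨a, ha, rfl, rfl⟩)
      · refine ⟨by omega, fun t ht => ?_⟩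
        by_cases htl : t < l
        · exact h4 t htl 0 (by omega)
        · have := h4 (l-1) (by omega) (t - (l-1)) (by omega)
          rw [show i + (l-1) + (t - (l-1)) = i + t by omega,
            show j + (l-1) + (t - (l-1)) = j + t by omega] at this
          exact this
      · exact ⟨⟨ha, ha⟩, fun t _ => rfl⟩
    · rintro ⟨⟨h1, h2⟩, h3⟩
      by_cases hij : i = j
      · right; exact ⟨i, h1, rfl, hij⟩
      · left
        refine ⟨hij, by omega, by omega, fun h hh t ht => ?_⟩
        rw [add_assoc, add_assoc]; exact h3 _ (by omega)
  have hd : Disjoint (AA (Agr y w) (N+l) l)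
      ((Finset.range (N+1)).image (fun i => (i,i)) : Finset (ℕ × ℕ)) := by
    rw [Set.disjoint_left]
    rintro ⟨i, j⟩ ⟨h1, -⟩ h2
    simp at h2 h1
    omega
  have hc := Set.ncard_union_eq hd (AA_fin _ _ _) (Finset.finite_toSet _)
  rw [h, Set.ncard_coe_finset, Set.ncard_coe_finset, Finset.card_image_of_injective _
    (fun a b hab => (Prod.mk.inj hab).1), Finset.card_range] at hc
  rw [hc, QQ]; push_cast; ring

lemma QQ_lim (y : ℕ → Bool) (w l : ℕ) (hw : 1 ≤ w) (hl : 1 ≤ l) (c : ℝ)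
    (h : Tendsto (fun n : ℕ => ((pairs (wnd (w+l-1) y) n).card : ℝ) / (n:ℝ)^2) atTop (𝓝 c)) :
    Tendsto (fun n : ℕ => QQ (Agr y w) n l / (n:ℝ)^2) atTop (𝓝 c) := by
  rw [← tendsto_add_atTop_iff_nat l]
  have h1 := (tendsto_add_atTop_iff_nat 1).2 h
  have hz : Tendsto (fun N : ℕ => ((N:ℝ)+1) / ((N:ℝ)+l)^2) atTop (𝓝 0) := by
    have : Tendsto (fun N : ℕ => (1:ℝ) / ((N:ℝ)+1)) atTop (𝓝 0) :=
      tendsto_one_div_add_atTop_nhds_zero_nat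
    refine squeeze_zero (fun N => by positivity) (fun N => ?_) this
    rw [div_le_div_iff₀ (by positivity) (by positivity)]
    have : (1:ℝ) ≤ l := by exact_mod_cast hl
    have : (0:ℝ) ≤ N := by positivity
    nlinarith
  have hr : Tendsto (fun N : ℕ => (((N:ℝ)+1) / ((N:ℝ)+l))^2) atTop (𝓝 1) := by
    have h0 : Tendsto (fun N : ℕ => ((N:ℝ)+1) / ((N:ℝ)+l)) atTop (𝓝 1) := by
      have h3 : Tendsto (fun N : ℕ => 1 + (1 - (l:ℝ)) / ((N:ℝ)+l)) atTop (𝓝 (1 + 0)) := by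
        refine tendsto_const_nhds.add (tendsto_const_nhds.div_atTop ?_)
        exact tendsto_atTop_add_const_right _ _ tendsto_natCast_atTop_atTop
      rw [add_zero] at h3
      refine h3.congr fun N => ?_
      have : (1:ℝ) ≤ l := by exact_mod_cast hl
      have : (N:ℝ) + l ≠ 0 := by positivity
      field_simp; ring
    simpa using h0.pow 2
  have := (h1.mul hr).sub hz
  rw [mul_one, sub_zero] at this
  refine this.congr fun N => ?_
  have h2 := QQ_eq y w l N hw hl
  have : (1:ℝ) ≤ l := by exact_mod_cast hl
  have h3 : (N:ℝ) + l ≠ 0 := by positivity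
  have h4 : (N:ℝ) + 1 ≠ 0 := by positivity
  rw [← h2]
  push_cast
  field_simp
  ring

end lines

lemma ratio_lim (C : ℕ → ℝ) (κ : ℝ) (hκ : 0 < κ) (hanti : Antitone C)
    (hlow : ∀ w : ℕ, 1 ≤ w → κ ≤ w * C w)
    (hconv : ∀ w, 1 ≤ w → 0 ≤ C w - 2 * C (w+1) + C (w+2)) :
    Tendsto (fun w => C (w+1) / C w) atTop (𝓝 1) := by
  have hpos : ∀ w, 1 ≤ w → 0 < C w := by
    intro w hw
    have := hlow w hw
    have h0 : (0:ℝ) < w := by exact_mod_cast hw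
    by_contra hc
    push Not at hc
    nlinarith
  have hpos' : ∀ w, 0 ≤ C w := fun w => (hpos (w+1) (by omega)).le.trans (hanti (by omega))
  obtain ⟨c, hc⟩ : ∃ c, Tendsto C atTop (𝓝 c) :=
    ⟨_, tendsto_atTop_ciInf hanti ⟨0, by rintro _ ⟨w, rfl⟩; exact hpos' w⟩⟩
  have hS : ∀ a, 1 ≤ a → ∀ t, C (a+t) - C (a+t+1) ≤ C a - C (a+1) := by
    intro a ha t
    induction t with
    | zero => simp
    | succ t ih =>
      have := hconv (a+t) (by omega)
      rw [← add_assoc]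
      have e : a + t + 1 + 1 = a + t + 2 := by ring
      rw [e]; linarith
  have hsum : ∀ t a, 1 ≤ a → t * (C (a+t) - C (a+t+1)) ≤ C a - C (a+t) := by
    intro t
    induction t with
    | zero => intro a _; simp
    | succ t ih =>
      intro a ha
      have h1 := ih (a+1) (by omega)
      have h2 := hS a ha (t+1)
      rw [show a + 1 + t = a + (t+1) by ring] at h1
      push_cast
      linarith
  have hhalf : Tendsto (fun w : ℕ => C (w/2) - C w) atTop (𝓝 0) := by
    have := (hc.comp (Nat.tendsto_div_const_atTop (n := 2) (by norm_num))).sub hc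
    simpa using this
  have hq : Tendsto (fun w : ℕ => 1 - C (w+1) / C w) atTop (𝓝 0) := by
    have h2 : Tendsto (fun w : ℕ => (2/κ) * (C (w/2) - C w)) atTop (𝓝 0) := by
      simpa using hhalf.const_mul (2/κ)
    refine squeeze_zero' ?_ ?_ h2
    · filter_upwards [eventually_ge_atTop 1] with w hw
      rw [sub_nonneg, div_le_one (hpos w hw)]; exact hanti (by omega)
    · filter_upwards [eventually_ge_atTop 2] with w hw
      have hp := hpos w (by omega)
      have h1 := hsum (w - w/2) (w/2) (by omega)
      rw [show w/2 + (w - w/2) = w by omega] at h1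
      have h3 : (w:ℝ) ≤ 2 * ((w - w/2 : ℕ) : ℝ) := by
        exact_mod_cast (by omega : w ≤ 2 * (w - w/2))
      have h4 : 0 ≤ C w - C (w+1) := sub_nonneg.2 (hanti (by omega))
      have h5 := hlow w (by omega)
      have e : 1 - C (w+1) / C w = (C w - C (w+1)) / C w := by field_simp
      rw [e, div_le_iff₀ hp, div_mul_eq_mul_div, div_mul_eq_mul_div, le_div_iff₀ hκ]
      have h6 : (w:ℝ) * (C w - C (w+1)) ≤ 2 * (C (w/2) - C w) := by nlinarith
      calc (C w - C (w+1)) * κ ≤ (C w - C (w+1)) * (w * C w) := by gcongr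
        _ = (w * (C w - C (w+1))) * C w := by ring
        _ ≤ _ := by gcongr
  have := hq.const_sub 1
  simpa using this

lemma ratio_lim' (C : ℕ → ℝ) (hpos : ∀ w, 1 ≤ w → 0 < C w)
    (h : Tendsto (fun w => C (w+1) / C w) atTop (𝓝 1)) (j : ℕ) :
    Tendsto (fun w => C (w+j) / C w) atTop (𝓝 1) := by
  induction j with
  | zero =>
    refine tendsto_const_nhds.congr' ?_
    filter_upwards [eventually_ge_atTop 1] with w hw
    rw [add_zero, div_self (hpos w hw).ne']
  | succ j ih =>
    have h1 := ((tendsto_add_atTop_iff_nat j).2 h).mul ih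
    rw [one_mul] at h1
    refine h1.congr' ?_
    filter_upwards [eventually_ge_atTop 1] with w hw
    have := (hpos (w+j) (by omega)).ne'
    have := (hpos w hw).ne'
    rw [← add_assoc]
    field_simp
noncomputable def kk (ε : ℝ) : ℕ := sInf {k : ℕ | (2:ℝ)^(-(k:ℤ)) ≤ ε}

lemma two_anti {a b : ℕ} (h : a ≤ b) : (2:ℝ)^(-(b:ℤ)) ≤ (2:ℝ)^(-(a:ℤ)) :=
  zpow_le_zpow_right₀ (by norm_num) (by omega)

lemma kk_le (ε : ℝ) (hε : 0 < ε) (i : ℕ) : (2:ℝ)^(-(i:ℤ)) ≤ ε ↔ kk ε ≤ i := by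
  constructor
  · intro h; exact Nat.sInf_le h
  · intro h
    have hne : {k : ℕ | (2:ℝ)^(-(k:ℤ)) ≤ ε}.Nonempty := by
      obtain ⟨k, hk⟩ := exists_pow_lt_of_lt_one hε (by norm_num : (1/2:ℝ) < 1)
      refine ⟨k, ?_⟩
      show (2:ℝ)^(-(k:ℤ)) ≤ ε
      rw [zpow_neg, zpow_natCast]
      rw [one_div, inv_pow] at hk
      exact hk.le
    have : (2:ℝ)^(-(kk ε:ℤ)) ≤ ε := Nat.sInf_mem hne
    exact (two_anti h).trans this

lemma kk_tendsto : Tendsto kk (nhdsWithin 0 (Set.Ioi 0)) atTop := by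
  rw [tendsto_atTop]
  intro M
  have hM : (0:ℝ) < (2:ℝ)^(-(M:ℤ)) := by positivity
  filter_upwards [Ioo_mem_nhdsGT hM] with ε hε
  by_contra hc
  push Not at hc
  exact absurd ((kk_le ε hε.1 M).2 hc.le) (not_le.2 hε.2)

lemma seqDist_le {α : Type*} (x y : ℕ → α) (ε : ℝ) (hε : 0 < ε) :
    seqDist x y ≤ ε ↔ ∀ h < kk ε, x h = y h := by
  unfold seqDist
  split_ifs with hxy
  · subst hxy; simp [hε.le]
  · rw [kk_le ε hε]
    have hne : {i : ℕ | x i ≠ y i}.Nonempty := by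
      obtain ⟨i, hi⟩ := Function.ne_iff.1 hxy
      exact ⟨i, hi⟩
    constructor
    · intro h i hi
      by_contra hc
      have : sInf {i : ℕ | x i ≠ y i} ≤ i := Nat.sInf_le hc
      omega
    · intro h
      by_contra hc
      push Not at hc
      exact (Nat.sInf_mem hne) (h _ hc)

lemma shift_iter {α : Type*} (x : ℕ → α) (i h : ℕ) : shift^[i] x h = x (i + h) := by
  induction i generalizing x with
  | zero => simp
  | succ i ih => rw [Function.iterate_succ_apply, ih, shift]; congr 1; ring

lemma RP_eq (y : ℕ → Bool) (m : ℕ) (hm : 1 ≤ m) (ε : ℝ) (hε : 0 < ε) (hk : 1 ≤ kk ε) :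
    RPone seqDist shift (embedSeq m y) ε = Agr y (kk ε + m - 1) := by
  funext i j
  rw [eq_iff_iff, RPone, seqDist_le _ _ _ hε]
  simp only [shift_iter]
  constructor
  · intro H t ht
    by_cases htk : t < kk ε
    · have := congrFun (H t htk) ⟨0, by omega⟩
      simpa [embedSeq] using this
    · have := congrFun (H (kk ε - 1) (by omega)) ⟨t - (kk ε - 1), by omega⟩
      simp only [embedSeq] at this
      rw [show i + (kk ε - 1) + (t - (kk ε - 1)) = i + t by omega,
            show j + (kk ε - 1) + (t - (kk ε - 1)) = j + t by omega] at this
      exact this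
  · intro H h hh
    funext t
    simp only [embedSeq]
    rw [add_assoc, add_assoc]
    exact H _ (by have := t.2; omega)
end RQAProof

open RQA

/-- Limit of determinism: for a uniform binary substitution ζ, every
y ∈ X_ζ and m, ℓ ∈ ℕ, the asymptotic determinism DET_ℓ(y^{(m)},∞,ε) exists for all
sufficiently small ε > 0 and tends to 1 as ε → 0⁺. -/
theorem determinism_tendsto_one
    (ζ : Bool → List Bool) (q : ℕ) (hζ : IsConstLenSubst ζ q)
    (y : ℕ → Bool) (hy : y ∈ SubstShift ζ)
    (m ℓ : ℕ) (hm : 1 ≤ m) (hℓ : 1 ≤ ℓ) :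
    ∃ D : ℝ → ℝ, ∃ ε₁ : ℝ, 0 < ε₁ ∧
      (∀ ε : ℝ, 0 < ε → ε ≤ ε₁ →
        Tendsto (fun n : ℕ => DETrm seqDist shift (embedSeq m y) n ε ℓ) atTop (𝓝 (D ε))) ∧
      Tendsto D (nhdsWithin 0 (Set.Ioi 0)) (𝓝 1) := by
  classical
  have hq0 : 0 < q := by have := hζ.1; omega
  have hqr : (0:ℝ) < q := by exact_mod_cast hq0
  choose C hC using RQAProof.pairs_lim hζ hy
  have hanti : Antitone C := by
    refine antitone_nat_of_succ_le fun w => ?_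
    refine le_of_tendsto_of_tendsto' (hC (w+1)) (hC w) fun n => ?_
    have : RQAProof.pairs (RQAProof.wnd (w+1) y) n ⊆ RQAProof.pairs (RQAProof.wnd w y) n := by
      intro p hp
      simp only [RQAProof.pairs, Finset.mem_filter, RQAProof.wnd_eq_iff] at hp ⊢
      exact ⟨hp.1, fun t ht => hp.2 t (by omega)⟩
    have := Finset.card_le_card this
    gcongr
  have hlow : ∀ w : ℕ, 1 ≤ w → 1 / (4 * q : ℝ) ≤ w * C w := by
    intro w hw
    refine ge_of_tendsto ((hC w).const_mul (w:ℝ)) ?_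
    filter_upwards [eventually_gt_atTop 0] with n hn
    have := RQAProof.pairs_lower hζ hy w hw n
    have hn0 : (0:ℝ) < n := by exact_mod_cast hn
    rw [← mul_div_assoc, div_le_div_iff₀ (by positivity) (by positivity)]
    linarith
  have hpos : ∀ w, 1 ≤ w → 0 < C w := by
    intro w hw
    have h1 := hlow w hw
    have h2 : 0 < 1 / (4 * q : ℝ) := by positivity
    have h0 : (0:ℝ) < w := by exact_mod_cast hw
    by_contra hc
    push Not at hc
    nlinarith
  have hQ : ∀ w l, 1 ≤ w → 1 ≤ l → Tendsto (fun n : ℕ => RQAProof.QQ (RQAProof.Agr y w) n l / (n:ℝ)^2)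
      atTop (𝓝 (C (w+l-1))) := fun w l hw hl => RQAProof.QQ_lim y w l hw hl _ (hC _)
  have hconv : ∀ w, 1 ≤ w → 0 ≤ C w - 2 * C (w+1) + C (w+2) := by
    intro w hw
    have h1 := hQ 1 w le_rfl hw
    have h2 := hQ 1 (w+1) le_rfl (by omega)
    have h3 := hQ 1 (w+2) le_rfl (by omega)
    rw [show 1 + w - 1 = w by omega] at h1
    rw [show 1 + (w+1) - 1 = w+1 by omega] at h2
    rw [show 1 + (w+2) - 1 = w+2 by omega] at h3
    refine ge_of_tendsto' ((h1.sub (h2.const_mul 2)).add h3) fun n => ?_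
    have := RQAProof.convexQ (RQAProof.Agr y 1) n w
    have e : RQAProof.QQ (RQAProof.Agr y 1) n w / (n:ℝ)^2
        - 2 * (RQAProof.QQ (RQAProof.Agr y 1) n (w+1) / (n:ℝ)^2)
        + RQAProof.QQ (RQAProof.Agr y 1) n (w+2) / (n:ℝ)^2
        = (RQAProof.QQ (RQAProof.Agr y 1) n w - 2 * RQAProof.QQ (RQAProof.Agr y 1) n (w+1)
          + RQAProof.QQ (RQAProof.Agr y 1) n (w+2)) / (n:ℝ)^2 := by ring
    rw [e]
    positivity
  have hratio := RQAProof.ratio_lim' C hpos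
    (RQAProof.ratio_lim C _ (by positivity : 0 < 1 / (4 * q : ℝ)) hanti hlow hconv)
  let E : ℕ → ℝ := fun w => ℓ * (C (w + (ℓ - 1)) / C w) - (ℓ - 1) * (C (w + ℓ) / C w)
  have hE : Tendsto E atTop (𝓝 1) := by
    have := ((hratio (ℓ-1)).const_mul (ℓ:ℝ)).sub ((hratio ℓ).const_mul ((ℓ:ℝ) - 1))
    simpa using this
  refine ⟨fun ε => E (RQAProof.kk ε + m - 1), 1/2, by norm_num, ?_, ?_⟩
  · intro ε h0 h1
    have hk : 1 ≤ RQAProof.kk ε := by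
      by_contra hc
      have := (RQAProof.kk_le ε h0 0).2 (by omega)
      norm_num at this
      linarith
    have hRP := RQAProof.RP_eq y m hm ε h0 hk
    set w := RQAProof.kk ε + m - 1 with hw
    have hw1 : 1 ≤ w := by omega
    have t1 := hQ w ℓ hw1 hℓ
    have t2 := hQ w (ℓ+1) hw1 (by omega)
    have t3 := hQ w 1 hw1 le_rfl
    rw [show w + ℓ - 1 = w + (ℓ-1) by omega] at t1
    rw [show w + (ℓ+1) - 1 = w + ℓ by omega] at t2
    rw [show w + 1 - 1 = w by omega] at t3
    have hp := (hpos w hw1).ne'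
    have := ((t1.const_mul (ℓ:ℝ)).sub (t2.const_mul ((ℓ:ℝ) - 1))).div t3 hp
    have e : (ℓ * C (w + (ℓ-1)) - (ℓ - 1) * C (w + ℓ)) / C w = E w := by
      simp only [E]; ring
    rw [e] at this
    refine this.congr' ?_
    filter_upwards [eventually_ge_atTop 2] with n hn
    have hn0 : (2:ℝ) ≤ n := by exact_mod_cast hn
    have hn1 : (n:ℝ) ≠ 0 := by positivity
    have hn2 : (n:ℝ)^2 - n ≠ 0 := by nlinarith
    have hn3 : (n:ℝ)^2 ≠ 0 := by positivity
    rw [DETrm, RQAProof.RRate_eq _ _ _ _ _ _ hℓ, RQAProof.RRate_eq _ _ _ _ _ _ le_rfl, hRP,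
      div_div_div_cancel_right₀ hn2]
    simp only [Pi.div_apply]
    rw [← mul_div_assoc, ← mul_div_assoc, ← sub_div, div_div_div_cancel_right₀ hn3]
    simp
  · refine hE.comp ?_
    refine tendsto_atTop_mono (fun ε => ?_) RQAProof.kk_tendsto
    omega
end

section
/- Let (X,d) be a metric space, f : X → X a map, x ∈ X, ℓ ∈ ℕ, n ≥ 2 an integer and ε > 0. Then C_ℓ(x,n,ε) = n^{-2}·[Σ_{l≥ℓ} (l − ℓ + 1)·N_l(x,n,ε) + n + Δ_ℓ] for some real number Δ_ℓ with 0 ≤ Δ_ℓ ≤ 2(ℓ−1)(n−1). -/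
open Filter Topology MeasureTheory

open RQA

theorem line_unique {X : Type*} (d : X → X → ℝ) (f : X → X) (x : X) (n : ℕ) (ε : ℝ)
    (i j l s i' j' l' s' : ℕ) (h : IsLine d f x n ε i j l) (h' : IsLine d f x n ε i' j' l')
    (hs : s < l) (hs' : s' < l') (e1 : i + s = i' + s') (e2 : j + s = j' + s') :
    i = i' ∧ j = j' ∧ l = l' ∧ s = s' := by
  obtain ⟨a1, a2, a3, a4, a5, a6, a7⟩ := h
  obtain ⟨b1, b2, b3, b4, b5, b6, b7⟩ := h'
  have hi : i = i' := by
    rcases lt_trichotomy i i' with h | h | h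
    · exfalso
      apply b6 (by omega) (by omega)
      have := a5 (i' - 1 - i) (by omega)
      rwa [show i + (i' - 1 - i) = i' - 1 by omega, show j + (i' - 1 - i) = j' - 1 by omega] at this
    · exact h
    · exfalso
      apply a6 (by omega) (by omega)
      have := b5 (i - 1 - i') (by omega)
      rwa [show i' + (i - 1 - i') = i - 1 by omega, show j' + (i - 1 - i') = j - 1 by omega] at this
  have hss : s = s' := by omega
  have hj : j = j' := by omega
  subst hi hj
  refine ⟨rfl, rfl, ?_, hss⟩
  rcases lt_trichotomy l l' with h | h | h
  · exact absurd (b5 l h) (a7 (by omega))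
  · exact h
  · exact absurd (a5 l' h) (b7 (by omega))

theorem line_exists {X : Type*} (d : X → X → ℝ) (f : X → X) (x : X) (n : ℕ) (ε : ℝ)
    (ℓ a b : ℕ) (hℓ : 1 ≤ ℓ) (hab : a ≠ b) (ha : a + ℓ ≤ n) (hb : b + ℓ ≤ n)
    (hR : ∀ k, k < ℓ → RPone d f x ε (a + k) (b + k)) :
    ∃ i j k s, IsLine d f x n ε i j (ℓ + k) ∧ s ≤ k ∧ i + s = a ∧ j + s = b := by
  classical
  let P : ℕ → Prop := fun t => t ≤ a ∧ t ≤ b ∧ ∀ u, u ≤ t → RPone d f x ε (a - u) (b - u)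
  let Q : ℕ → Prop := fun e => a + e ≤ n ∧ b + e ≤ n ∧ ∀ h, h < e → RPone d f x ε (a + h) (b + h)
  have hP0 : P 0 := ⟨by omega, by omega, fun u hu => by
    obtain rfl : u = 0 := by omega
    simpa using hR 0 hℓ⟩
  have hQ0 : Q ℓ := ⟨ha, hb, hR⟩
  set t := Nat.findGreatest P a with ht
  set e := Nat.findGreatest Q n with he
  obtain ⟨t1, t2, t3⟩ : P t := Nat.findGreatest_spec (m := 0) (by omega) hP0
  obtain ⟨q1, q2, q3⟩ : Q e := Nat.findGreatest_spec (m := ℓ) (by omega) hQ0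
  have hle : ℓ ≤ e := Nat.le_findGreatest (by omega) hQ0
  refine ⟨a - t, b - t, e - ℓ + t, t, ⟨by omega, by omega, by omega, by omega, ?_, ?_, ?_⟩,
    by omega, by omega, by omega⟩
  · intro h hh
    by_cases hc : h ≤ t
    · have := t3 (t - h) (by omega)
      rwa [show a - (t - h) = a - t + h by omega, show b - (t - h) = b - t + h by omega] at this
    · have := q3 (h - t) (by omega)
      rwa [show a + (h - t) = a - t + h by omega, show b + (h - t) = b - t + h by omega] at this
  · intro h1 h2 h3
    have : P (t + 1) := ⟨by omega, by omega, fun u hu => by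
      rcases Nat.lt_or_ge t u with h | h
      · obtain rfl : u = t + 1 := by omega
        exact h3
      · exact t3 u h⟩
    have := Nat.le_findGreatest (n := a) (by omega) this
    omega
  · intro h1 h3
    rw [show a - t + (ℓ + (e - ℓ + t)) = a + e by omega,
      show b - t + (ℓ + (e - ℓ + t)) = b + e by omega] at h3
    have : Q (e + 1) := ⟨by omega, by omega, fun u hu => by
      rcases Nat.lt_or_ge u e with h | h
      · exact q3 u h
      · obtain rfl : u = e := by omega
        exact h3⟩
    have := Nat.le_findGreatest (n := n) (by omega) this
    omega

/-- C_ℓ(x,n,ε) = n^{-2}·[Σ_{l≥ℓ}(l−ℓ+1)·N_l(x,n,ε) + n + Δ_ℓ]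
with 0 ≤ Δ_ℓ ≤ 2(ℓ−1)(n−1). -/
theorem corrSum_eq_sum_Nlines
    {X : Type*} [MetricSpace X] (f : X → X) (x : X)
    (ℓ n : ℕ) (hℓ : 1 ≤ ℓ) (hn : 2 ≤ n) (ε : ℝ) (hε : 0 < ε) :
    ∃ Δ : ℝ, 0 ≤ Δ ∧ Δ ≤ 2 * ((ℓ : ℝ) - 1) * ((n : ℝ) - 1) ∧
      corrSum dist f x ℓ n ε =
        ((n : ℝ) ^ 2)⁻¹ *
          ((∑' k : ℕ, ((k : ℝ) + 1) * (Nlines dist f x n ε (ℓ + k) : ℝ)) + (n : ℝ) + Δ) := by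
  classical
  let L : ℕ → Finset (ℕ × ℕ) := fun l =>
    (Finset.range n ×ˢ Finset.range n).filter (fun p => IsLine dist f x n ε p.1 p.2 l)
  have hL : ∀ l, Nlines dist f x n ε l = (L l).card := by
    intro l
    rw [Nlines, ← Set.ncard_coe_finset]
    congr 1
    ext p
    simp only [L, Set.mem_setOf_eq, Finset.coe_filter, Finset.mem_product, Finset.mem_range]
    constructor
    · intro h
      have h' := h
      obtain ⟨h1, h2, h3, -⟩ := h'
      exact ⟨⟨by omega, by omega⟩, h⟩
    · exact fun h => h.2
  let B : ℕ × ℕ → Prop := fun p =>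
    ∀ k, k < ℓ → dist (f^[p.1 + k] x) (f^[p.2 + k] x) ≤ ε
  let S := Finset.range n ×ˢ Finset.range n
  let C := S.filter B
  let D := C.filter (fun p => p.1 = p.2)
  let O := C.filter (fun p => ¬ p.1 = p.2)
  let A := O.filter (fun p => p.1 + ℓ ≤ n ∧ p.2 + ℓ ≤ n)
  let E := O.filter (fun p => ¬ (p.1 + ℓ ≤ n ∧ p.2 + ℓ ≤ n))
  have hC : (Set.ncard {p : ℕ × ℕ | p.1 < n ∧ p.2 < n ∧
      ∀ k, k < ℓ → dist (f^[p.1 + k] x) (f^[p.2 + k] x) ≤ ε}) = C.card := by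
    rw [← Set.ncard_coe_finset]
    congr 1
    ext p
    simp [C, S, B, and_assoc]
  have hCDO : D.card + O.card = C.card := Finset.card_filter_add_card_filter_not _
  have hOAE : A.card + E.card = O.card := Finset.card_filter_add_card_filter_not _
  have hD : D.card = n := by
    have : D = (Finset.range n).image (fun i => (i, i)) := by
      ext ⟨a, b⟩
      simp only [D, C, S, B, Finset.mem_filter, Finset.mem_product, Finset.mem_range,
        Finset.mem_image, Prod.mk.injEq]
      constructor
      · rintro ⟨⟨⟨h1, h2⟩, -⟩, h⟩
        exact ⟨a, h1, rfl, h⟩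
      · rintro ⟨i, hi, rfl, rfl⟩
        exact ⟨⟨⟨hi, hi⟩, fun k _ => by simpa using hε.le⟩, rfl⟩
    rw [this, Finset.card_image_of_injective _ (fun a b h => by simpa using h), Finset.card_range]
  have hE : E.card ≤ 2 * ((ℓ - 1) * (n - 1)) := by
    let F := (Finset.range (ℓ - 1) ×ˢ Finset.range (n - 1))
    have : E ⊆ F.image (fun q => (n - 1 - q.1, q.2)) ∪ F.image (fun q => (q.2, n - 1 - q.1)) := by
      rintro ⟨a, b⟩ h
      simp only [E, O, C, S, Finset.mem_filter, Finset.mem_product, Finset.mem_range] at h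
      obtain ⟨⟨⟨⟨h1, h2⟩, -⟩, h3⟩, h4⟩ := h
      simp only [F, Finset.mem_union, Finset.mem_image, Finset.mem_product, Finset.mem_range,
        Prod.mk.injEq, Prod.exists]
      rcases lt_or_gt_of_ne h3 with h | h
      · right
        exact ⟨n - 1 - b, a, ⟨by omega, by omega⟩, rfl, by omega⟩
      · left
        exact ⟨n - 1 - a, b, ⟨by omega, by omega⟩, by omega, rfl⟩
    have hF : F.card = (ℓ - 1) * (n - 1) := by simp [F]
    calc E.card ≤ _ := Finset.card_le_card this
      _ ≤ _ := Finset.card_union_le _ _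
      _ ≤ F.card + F.card := add_le_add Finset.card_image_le Finset.card_image_le
      _ = _ := by rw [hF]; ring
  have hA : ∑ k ∈ Finset.range (n + 1), (L (ℓ + k)).card * (k + 1) = A.card := by
    let T := (Finset.range (n + 1)).sigma (fun k => L (ℓ + k) ×ˢ Finset.range (k + 1))
    have hT : T.card = ∑ k ∈ Finset.range (n + 1), (L (ℓ + k)).card * (k + 1) := by
      simp [T, Finset.card_sigma]
    rw [← hT]
    refine Finset.card_bij (fun q _ => (q.2.1.1 + q.2.2, q.2.1.2 + q.2.2)) ?_ ?_ ?_
    · rintro ⟨k, ⟨i, j⟩, s⟩ h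
      simp only [T, L, Finset.mem_sigma, Finset.mem_product, Finset.mem_range,
        Finset.mem_filter] at h
      obtain ⟨h1, ⟨⟨h2, h3⟩, h4⟩, h5⟩ := h
      obtain ⟨a1, a2, a3, a4, a5, a6, a7⟩ := h4
      simp only [A, O, C, S, B, Finset.mem_filter, Finset.mem_product, Finset.mem_range]
      refine ⟨⟨⟨⟨by omega, by omega⟩, ?_⟩, by omega⟩, by omega, by omega⟩
      intro u hu
      have := a5 (s + u) (by omega)
      rwa [← add_assoc, ← add_assoc] at this
    · rintro ⟨k, ⟨i, j⟩, s⟩ h ⟨k', ⟨i', j'⟩, s'⟩ h' e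
      simp only [T, L, Finset.mem_sigma, Finset.mem_product, Finset.mem_range,
        Finset.mem_filter] at h h'
      simp only [Prod.mk.injEq] at e
      obtain ⟨e1, e2, e3, e4⟩ := line_unique dist f x n ε i j (ℓ + k) s i' j' (ℓ + k') s'
        h.2.1.2 h'.2.1.2 (by omega) (by omega) e.1 e.2
      obtain rfl : k = k' := by omega
      subst e1 e2 e4
      rfl
    · rintro ⟨a, b⟩ h
      simp only [A, O, C, S, B, Finset.mem_filter, Finset.mem_product, Finset.mem_range] at h
      obtain ⟨⟨⟨⟨h1, h2⟩, h3⟩, h4⟩, h5, h6⟩ := h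
      obtain ⟨i, j, k, s, hl, hs, rfl, rfl⟩ := line_exists dist f x n ε ℓ a b hℓ h4 h5 h6 h3
      refine ⟨⟨k, (i, j), s⟩, ?_, rfl⟩
      simp only [T, L, Finset.mem_sigma, Finset.mem_product, Finset.mem_range,
        Finset.mem_filter]
      have hl' := hl
      obtain ⟨a1, a2, a3, -⟩ := hl'
      exact ⟨by omega, ⟨⟨by omega, by omega⟩, hl⟩, by omega⟩
  have hsum : (∑' k : ℕ, ((k : ℝ) + 1) * (Nlines dist f x n ε (ℓ + k) : ℝ)) = A.card := by
    rw [tsum_eq_sum (s := Finset.range (n + 1)), ← hA]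
    · push_cast
      refine Finset.sum_congr rfl fun k _ => ?_
      rw [hL, mul_comm]
    · intro k hk
      have : L (ℓ + k) = ∅ := by
        apply Finset.filter_eq_empty_iff.2
        rintro p - ⟨a1, a2, -⟩
        simp only [Finset.mem_range] at hk
        omega
      rw [hL, this]
      simp
  refine ⟨E.card, by positivity, ?_, ?_⟩
  · have : (E.card : ℝ) ≤ ((2 * ((ℓ - 1) * (n - 1)) : ℕ) : ℝ) := by exact_mod_cast hE
    rw [Nat.cast_mul, Nat.cast_mul, Nat.cast_sub hℓ, Nat.cast_sub (by omega : 1 ≤ n)] at this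
    push_cast at this
    linarith
  · rw [corrSum, hC, hsum, div_eq_inv_mul, ← hCDO, ← hOAE, hD]
    push_cast
    ring
end

section
/- Let (X,d) be a metric space, f : X → X a map, x ∈ X, ℓ ∈ ℕ, n ≥ 2 an integer and ε > 0. Then RR_ℓ(x,n,ε) = (n/(n−1))·[ℓ·C_ℓ(x,n,ε) − (ℓ−1)·C_{ℓ+1}(x,n,ε)] − 1/(n−1) + δ for some real number δ with |δ| ≤ 2ℓ(ℓ−1)/n. -/
open Filter Topology MeasureTheory

open RQA

namespace RRaux

def W (R : ℕ → ℕ → Prop) (n l : ℕ) : Set (ℕ × ℕ) :=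
  {p | p.1 + l ≤ n ∧ p.2 + l ≤ n ∧ p.1 ≠ p.2 ∧ ∀ h, h < l → R (p.1 + h) (p.2 + h)}

def sh (p : ℕ × ℕ) : ℕ × ℕ := (p.1 + 1, p.2 + 1)

def S (R : ℕ → ℕ → Prop) (n l : ℕ) : Set (ℕ × ℕ) := W R n l \ (sh '' W R n (l + 1))

lemma W_fin (R : ℕ → ℕ → Prop) (n l : ℕ) : (W R n l).Finite := by
  apply ((Set.finite_Iic n).prod (Set.finite_Iic n)).subset
  rintro ⟨i, j⟩ ⟨h1, h2, -, -⟩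
  simp at *
  omega

lemma W_anti (R : ℕ → ℕ → Prop) (n l : ℕ) : W R n (l + 1) ⊆ W R n l := by
  rintro ⟨i, j⟩ ⟨h1, h2, h3, h4⟩
  simp only at h1 h2 h3 h4
  exact ⟨by simp only; omega, by simp only; omega, h3, fun h hh => h4 h (by omega)⟩

lemma sh_sub (R : ℕ → ℕ → Prop) (n l : ℕ) : sh '' W R n (l + 1) ⊆ W R n l := by
  rintro _ ⟨⟨i, j⟩, ⟨h1, h2, h3, h4⟩, rfl⟩
  simp only at h1 h2 h3 h4
  refine ⟨by simp only [sh]; omega, by simp only [sh]; omega, by simp only [sh]; omega,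
    fun h hh => ?_⟩
  have := h4 (h + 1) (by omega)
  simpa only [sh, add_assoc, add_comm 1 h] using this

lemma sh_inj : Function.Injective sh := by
  rintro ⟨a, b⟩ ⟨c, e⟩ h
  simp [sh] at h
  simp [h]

lemma S_card (R : ℕ → ℕ → Prop) (n l : ℕ) :
    ((S R n l).ncard : ℝ) = (W R n l).ncard - (W R n (l + 1)).ncard := by
  have := Set.ncard_diff_add_ncard_of_subset (sh_sub R n l) (W_fin R n l)
  rw [Set.ncard_image_of_injective _ sh_inj] at this
  rw [S, ← this]; push_cast; ring

lemma sh_mem {R : ℕ → ℕ → Prop} {n l : ℕ} {p : ℕ × ℕ} (hp : p ∈ W R n (l + 1))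
    (hs : p ∈ sh '' W R n (l + 1)) : p ∈ sh '' W R n (l + 2) := by
  obtain ⟨⟨i, j⟩, ⟨h1, h2, h3, h4⟩, rfl⟩ := hs
  obtain ⟨g1, g2, g3, g4⟩ := hp
  simp only [sh] at *
  refine ⟨(i, j), ⟨by simp only; omega, by simp only; omega, h3, fun h hh => ?_⟩, rfl⟩
  rcases Nat.eq_zero_or_pos h with rfl | h0
  · exact h4 0 (by omega)
  · obtain ⟨k, rfl⟩ : ∃ k, h = k + 1 := ⟨h - 1, by omega⟩
    have := g4 k (by omega)
    simpa only [add_assoc, add_comm 1 k] using this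

lemma S_anti (R : ℕ → ℕ → Prop) (n l : ℕ) : S R n (l + 1) ⊆ S R n l := by
  rintro p ⟨h1, h2⟩
  exact ⟨W_anti R n l h1, fun h => h2 (sh_mem h1 h)⟩

lemma N_card (R : ℕ → ℕ → Prop) (n l : ℕ) :
    ((S R n l \ S R n (l + 1)).ncard : ℝ)
      = (W R n l).ncard - 2 * (W R n (l + 1)).ncard + (W R n (l + 2)).ncard := by
  have := Set.ncard_diff_add_ncard_of_subset (S_anti R n l) ((W_fin R n l).subset Set.diff_subset)
  have h1 := S_card R n l
  have h2 := S_card R n (l + 1)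
  rw [← this] at h1
  push_cast at h1
  linarith

lemma line_iff {X : Type*} (d : X → X → ℝ) (f : X → X) (x : X) (n l : ℕ) (ε : ℝ) (hl : 1 ≤ l) :
    {p : ℕ × ℕ | IsLine d f x n ε p.1 p.2 l}
      = S (RPone d f x ε) n l \ S (RPone d f x ε) n (l + 1) := by
  set R := RPone d f x ε with hR
  ext ⟨i, j⟩
  constructor
  · rintro ⟨-, h1, h2, h3, h4, h5, h6⟩
    refine ⟨⟨⟨h1, h2, h3, h4⟩, ?_⟩, ?_⟩
    · rintro ⟨⟨a, b⟩, ⟨g1, g2, g3, g4⟩, hab⟩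
      simp only [sh, Prod.mk.injEq] at hab
      obtain ⟨rfl, rfl⟩ := hab
      exact h5 (by simp) (by simp) (g4 0 (by omega))
    · rintro ⟨⟨g1, g2, g3, g4⟩, -⟩
      simp only at g1 g2 h6
      exact h6 (by omega) (g4 l (by omega))
  · rintro ⟨⟨⟨h1, h2, h3, h4⟩, h5⟩, h6⟩
    simp only at h1 h2 h3 h4
    refine ⟨hl, h1, h2, h3, h4, ?_, ?_⟩
    · intro hi hj hr
      simp only at hi hj hr
      apply h5
      refine ⟨(i - 1, j - 1), ⟨by simp only; omega, by simp only; omega, by simp only; omega,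
        fun h hh => ?_⟩, by simp only [sh, Prod.mk.injEq]; omega⟩
      rcases Nat.eq_zero_or_pos h with rfl | h0
      · exact hr
      · have := h4 (h - 1) (by omega)
        have e1 : i + (h - 1) = i - 1 + h := by omega
        have e2 : j + (h - 1) = j - 1 + h := by omega
        rw [e1, e2] at this
        exact this
    · intro hm hr
      simp only at hm hr
      apply h6
      have hw : (i, j) ∈ W R n (l + 1) := by
        refine ⟨by simp only; omega, by simp only; omega, h3, fun h hh => ?_⟩
        rcases Nat.lt_succ_iff_lt_or_eq.mp hh with h7 | rfl
        · exact h4 h h7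
        · exact hr
      exact ⟨hw, fun hs => h5 (Set.image_mono (W_anti R n (l + 1)) hs)⟩

lemma telesc (a : ℕ → ℝ) (ℓ K : ℕ) :
    ∑ k ∈ Finset.range K, ((ℓ + k : ℕ) : ℝ) * (a (ℓ + k) - 2 * a (ℓ + k + 1) + a (ℓ + k + 2))
      = ℓ * a ℓ - (ℓ - 1) * a (ℓ + 1) - (ℓ + K) * a (ℓ + K) + (ℓ + K - 1) * a (ℓ + K + 1) := by
  induction K with
  | zero => simp
  | succ K ih =>
    rw [Finset.sum_range_succ, ih]
    simp only [← add_assoc]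
    push_cast
    ring

lemma W_big (R : ℕ → ℕ → Prop) (n l : ℕ) (h : n < l) : (W R n l).ncard = 0 := by
  have : W R n l = ∅ := by
    ext ⟨i, j⟩
    simp only [W, Set.mem_setOf_eq, Set.mem_empty_iff_false, iff_false]
    omega
  simp [this]

lemma RRate_eq {X : Type*} (d : X → X → ℝ) (f : X → X) (x : X) (n ℓ : ℕ) (ε : ℝ) (hl : 1 ≤ ℓ) :
    RRate d f x n ε ℓ = (ℓ * ((W (RPone d f x ε) n ℓ).ncard : ℝ)
      - (ℓ - 1) * ((W (RPone d f x ε) n (ℓ + 1)).ncard : ℝ)) / ((n : ℝ) ^ 2 - n) := by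
  set R := RPone d f x ε with hR
  have hN : ∀ k, ((ℓ + k : ℕ) : ℝ) * Pline d f x n ε (ℓ + k) = ((ℓ + k : ℕ) : ℝ) *
      (((W R n (ℓ + k)).ncard : ℝ) - 2 * (W R n (ℓ + k + 1)).ncard + (W R n (ℓ + k + 2)).ncard)
        / ((n : ℝ) ^ 2 - n) := by
    intro k
    rw [Pline, Nlines, line_iff d f x n (ℓ + k) ε (by omega), N_card]
    ring
  rw [RRate, tsum_eq_sum (s := Finset.range (n + 1))]
  · rw [Finset.sum_congr rfl fun k _ => hN k, ← Finset.sum_div,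
      telesc (fun l => ((W R n l).ncard : ℝ)), W_big R n (ℓ + (n + 1)) (by omega),
      W_big R n (ℓ + (n + 1) + 1) (by omega)]
    simp
  · intro k hk
    simp only [Finset.mem_range] at hk
    rw [hN, W_big R n (ℓ + k) (by omega), W_big R n (ℓ + k + 1) (by omega),
      W_big R n (ℓ + k + 2) (by omega)]
    simp

lemma strip_card (n m : ℕ) (T : Finset (ℕ × ℕ))
    (hT : ∀ p ∈ T, p.1 < n ∧ n ≤ p.1 + m ∧ p.2 < n ∧ p.1 ≠ p.2) : T.card ≤ m * (n - 1) := by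
  have hsub : T ⊆ (Finset.Ico (n - m) n).biUnion
      (fun i => ((Finset.range n).erase i).image (fun j => (i, j))) := by
    rintro ⟨i, j⟩ hp
    have := hT _ hp
    simp only [Finset.mem_biUnion, Finset.mem_Ico, Finset.mem_image, Finset.mem_erase,
      Finset.mem_range, Prod.mk.injEq] at *
    exact ⟨i, by omega, j, ⟨by omega, by omega⟩, rfl, rfl⟩
  refine (Finset.card_le_card hsub).trans ((Finset.card_biUnion_le_card_mul _ _ (n - 1) ?_).trans ?_)
  · intro i hi
    simp only [Finset.mem_Ico] at hi
    refine Finset.card_image_le.trans ?_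
    rw [Finset.card_erase_of_mem (by simp; omega), Finset.card_range]
  · apply Nat.mul_le_mul_right
    rw [Nat.card_Ico]
    omega

lemma corr_bound (R : ℕ → ℕ → Prop) (hR : ∀ i, R i i) (n l : ℕ) (hl : 1 ≤ l) (hn : 2 ≤ n) :
    ∃ E : ℝ, 0 ≤ E ∧ E ≤ 2 * (l - 1) * (n - 1) ∧
      (Set.ncard {p : ℕ × ℕ | p.1 < n ∧ p.2 < n ∧ ∀ k, k < l → R (p.1 + k) (p.2 + k)} : ℝ)
        = (W R n l).ncard + n + E := by
  classical
  set B : Finset (ℕ × ℕ) := (Finset.range n ×ˢ Finset.range n).filter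
    (fun p => ∀ k, k < l → R (p.1 + k) (p.2 + k)) with hB
  have e1 : {p : ℕ × ℕ | p.1 < n ∧ p.2 < n ∧ ∀ k, k < l → R (p.1 + k) (p.2 + k)} = (B : Set _) := by
    ext p; simp [hB, and_assoc]
  set D := B.filter (fun p => p.1 = p.2) with hD
  set O := B.filter (fun p => ¬ p.1 = p.2) with hO
  set A := O.filter (fun p => p.1 + l ≤ n ∧ p.2 + l ≤ n) with hA
  set T := O.filter (fun p => ¬ (p.1 + l ≤ n ∧ p.2 + l ≤ n)) with hT
  have c1 : D.card + O.card = B.card := Finset.card_filter_add_card_filter_not _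
  have c2 : A.card + T.card = O.card := Finset.card_filter_add_card_filter_not _
  have cD : D.card = n := by
    have : D = (Finset.range n).image (fun i => (i, i)) := by
      ext ⟨i, j⟩
      simp only [hD, hB, Finset.mem_filter, Finset.mem_product, Finset.mem_range,
        Finset.mem_image, Prod.mk.injEq]
      constructor
      · rintro ⟨⟨⟨h1, h2⟩, -⟩, h4⟩
        exact ⟨i, h1, rfl, h4⟩
      · rintro ⟨a, h, rfl, rfl⟩
        exact ⟨⟨⟨h, h⟩, fun k _ => hR _⟩, rfl⟩
    rw [this, Finset.card_image_of_injective _ (fun a b h => by simpa using h), Finset.card_range]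
  have cA : W R n l = (A : Set _) := by
    ext ⟨i, j⟩
    simp only [W, hA, hO, hB, Finset.coe_filter, Finset.mem_filter, Finset.mem_product,
      Finset.mem_range, Set.mem_setOf_eq]
    constructor
    · rintro ⟨h1, h2, h3, h4⟩
      exact ⟨⟨⟨⟨by omega, by omega⟩, h4⟩, h3⟩, h1, h2⟩
    · rintro ⟨⟨⟨-, h4⟩, h3⟩, h1, h2⟩
      exact ⟨h1, h2, h3, h4⟩
  have cT : T.card ≤ 2 * ((l - 1) * (n - 1)) := by
    set T1 := T.filter (fun p => n < p.1 + l)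
    set T2 := T.filter (fun p => ¬ n < p.1 + l)
    have c3 : T1.card + T2.card = T.card := Finset.card_filter_add_card_filter_not _
    have h1 : T1.card ≤ (l - 1) * (n - 1) := by
      apply strip_card
      intro p hp
      simp only [T1, hT, hO, hB, Finset.mem_filter, Finset.mem_product, Finset.mem_range] at hp
      obtain ⟨⟨⟨⟨⟨a, b⟩, -⟩, c⟩, e⟩, g⟩ := hp
      omega
    have h2 : (T2.image Prod.swap).card ≤ (l - 1) * (n - 1) := by
      apply strip_card
      intro q hq
      obtain ⟨p, hp, rfl⟩ := Finset.mem_image.mp hq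
      simp only [T2, hT, hO, hB, Finset.mem_filter, Finset.mem_product, Finset.mem_range] at hp
      obtain ⟨⟨⟨⟨⟨a, b⟩, -⟩, c⟩, e⟩, g⟩ := hp
      simp only [Prod.fst_swap, Prod.snd_swap]
      omega
    rw [Finset.card_image_of_injective _ Prod.swap_injective] at h2
    omega
  refine ⟨T.card, by positivity, ?_, ?_⟩
  · have : (T.card : ℝ) ≤ ((2 * ((l - 1) * (n - 1)) : ℕ) : ℝ) := by exact_mod_cast cT
    push_cast [Nat.cast_sub hl, Nat.cast_sub (show 1 ≤ n by omega)] at this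
    linarith
  · rw [e1, cA, Set.ncard_coe_finset, Set.ncard_coe_finset, ← c1, ← c2, cD]
    push_cast; ring

end RRaux

/-- Recurrence rate via correlation sums:
RR_ℓ(x,n,ε) = (n/(n−1))·[ℓ·C_ℓ − (ℓ−1)·C_{ℓ+1}] − 1/(n−1) + δ with |δ| ≤ 2ℓ(ℓ−1)/n. -/
theorem RRate_eq_corrSum
    {X : Type*} [MetricSpace X] (f : X → X) (x : X)
    (ℓ n : ℕ) (hℓ : 1 ≤ ℓ) (hn : 2 ≤ n) (ε : ℝ) (hε : 0 < ε) :
    ∃ δ : ℝ, |δ| ≤ 2 * (ℓ : ℝ) * ((ℓ : ℝ) - 1) / (n : ℝ) ∧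
      RRate dist f x n ε ℓ =
        ((n : ℝ) / ((n : ℝ) - 1)) *
          ((ℓ : ℝ) * corrSum dist f x ℓ n ε - ((ℓ : ℝ) - 1) * corrSum dist f x (ℓ + 1) n ε)
        - 1 / ((n : ℝ) - 1) + δ := by
  have hR : ∀ i, RPone dist f x ε i i := fun i => by simp [RPone, hε.le]
  obtain ⟨E, hE0, hE1, hE⟩ := RRaux.corr_bound _ hR n ℓ hℓ hn
  obtain ⟨F, hF0, hF1, hF⟩ := RRaux.corr_bound _ hR n (ℓ + 1) (by omega) hn
  have hc : corrSum dist f x ℓ n ε = _ / (n : ℝ) ^ 2 := congrArg (· / (n : ℝ) ^ 2) hE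
  have hc' : corrSum dist f x (ℓ + 1) n ε = _ / (n : ℝ) ^ 2 := congrArg (· / (n : ℝ) ^ 2) hF
  rw [RRaux.RRate_eq _ _ _ _ _ _ hℓ, hc, hc']
  have hn' : (2 : ℝ) ≤ n := by exact_mod_cast hn
  have hl' : (1 : ℝ) ≤ ℓ := by exact_mod_cast hℓ
  have n0 : (n : ℝ) ≠ 0 := by positivity
  have n1 : (n : ℝ) - 1 ≠ 0 := by linarith
  have hnn : (n : ℝ) ^ 2 - n = n * (n - 1) := by ring
  refine ⟨((ℓ - 1) * F - ℓ * E) / (n * (n - 1)), ?_, ?_⟩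
  · have hp : (0 : ℝ) < n * (n - 1) := mul_pos (by linarith) (by linarith)
    have e : 2 * (ℓ : ℝ) * ((ℓ : ℝ) - 1) / (n : ℝ)
        = (2 * (ℓ : ℝ) * ((ℓ : ℝ) - 1) * (n - 1)) / (n * (n - 1)) := by
      field_simp
    rw [abs_div, abs_of_pos hp, e]
    apply div_le_div_of_nonneg_right _ hp.le
    push_cast at hF1
    have a1 := mul_le_mul_of_nonneg_left hE1 (by linarith : (0 : ℝ) ≤ ℓ)
    have a2 := mul_le_mul_of_nonneg_left hF1 (by linarith : (0 : ℝ) ≤ ℓ - 1)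
    have a3 := mul_nonneg (by linarith : (0 : ℝ) ≤ ℓ) hE0
    have a4 := mul_nonneg (by linarith : (0 : ℝ) ≤ ℓ - 1) hF0
    rw [abs_le]
    constructor <;> nlinarith
  · rw [hnn]
    field_simp
    ring
end

section
/- Let (X,d) be a metric space, f : X → X a map, x ∈ X, ℓ ∈ ℕ, n ≥ 2 an integer and ε > 0. Then P≥_ℓ(x,n,ε) = (n/(n−1))·[C_ℓ(x,n,ε) − C_{ℓ+1}(x,n,ε)] + δ for some real number δ with |δ| ≤ 2ℓ/n. -/
open Filter Topology MeasureTheory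

open RQA

theorem RQA_back (R : ℕ → ℕ → Prop) (a : ℕ) : ∀ b, R a b →
    ∃ t, t ≤ a ∧ t ≤ b ∧ (∀ s, s ≤ t → R (a - s) (b - s)) ∧
      (t < a → t < b → ¬ R (a - t - 1) (b - t - 1)) := by
  induction a with
  | zero =>
    intro b hb
    refine ⟨0, le_rfl, Nat.zero_le _, ?_, ?_⟩
    · intro s hs
      obtain rfl : s = 0 := by omega
      simpa using hb
    · intro h; omega
  | succ a ih =>
    intro b hb
    by_cases h : 0 < b ∧ R a (b - 1)
    · obtain ⟨t, h1, h2, h3, h4⟩ := ih (b - 1) h.2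
      have hb0 := h.1
      refine ⟨t + 1, by omega, by omega, ?_, ?_⟩
      · intro s hs
        rcases Nat.eq_zero_or_pos s with rfl | hs0
        · simpa using hb
        · have := h3 (s - 1) (by omega)
          rwa [show a + 1 - s = a - (s - 1) by omega, show b - s = b - 1 - (s - 1) by omega]
      · intro h5 h6
        have := h4 (by omega) (by omega)
        rwa [show a + 1 - (t + 1) - 1 = a - t - 1 by omega,
          show b - (t + 1) - 1 = b - 1 - t - 1 by omega]
    · refine ⟨0, Nat.zero_le _, Nat.zero_le _, ?_, ?_⟩
      · intro s hs
        obtain rfl : s = 0 := by omega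
        simpa using hb
      · intro _ h6 h7
        exact h ⟨h6, by simpa using h7⟩

theorem RQA_inj {X : Type*} (d : X → X → ℝ) (f : X → X) (x : X) (n : ℕ) (ε : ℝ)
    {i j l i' j' l' : ℕ} (h : IsLine d f x n ε i j l) (h' : IsLine d f x n ε i' j' l')
    (h1 : i + l = i' + l') (h2 : j + l = j' + l') : i' ≤ i := by
  by_contra hlt
  push Not at hlt
  have hj : j' - j = i' - i := by omega
  obtain ⟨_, _, _, _, ho, _, _⟩ := h
  obtain ⟨hl', _, _, _, _, hz, _⟩ := h'
  apply hz (by omega) (by omega)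
  have := ho (i' - 1 - i) (by omega)
  rwa [show i + (i' - 1 - i) = i' - 1 by omega, show j + (i' - 1 - i) = j' - 1 by omega] at this

open Classical in
theorem RQA_count {X : Type*} [MetricSpace X] (f : X → X) (x : X)
    (ℓ n : ℕ) (hℓ : 1 ≤ ℓ) (ε : ℝ) :
    PlineGe dist f x n ε ℓ =
      (((Finset.range n ×ˢ Finset.range n).filter (fun p : ℕ × ℕ =>
        p.1 ≠ p.2 ∧ p.1 + ℓ ≤ n ∧ p.2 + ℓ ≤ n ∧ (∀ k, k < ℓ → RPone dist f x ε (p.1 + k) (p.2 + k)) ∧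
        (max p.1 p.2 + ℓ < n → ¬ RPone dist f x ε (p.1 + ℓ) (p.2 + ℓ)))).card : ℝ)
        / ((n : ℝ) ^ 2 - (n : ℝ)) := by
  set F : ℕ → Finset (ℕ × ℕ) := fun l => (Finset.range n ×ˢ Finset.range n).filter
    (fun p : ℕ × ℕ => IsLine dist f x n ε p.1 p.2 l) with hF
  have hmem : ∀ l p, p ∈ F l ↔ IsLine dist f x n ε p.1 p.2 l := by
    intro l p
    simp only [hF, Finset.mem_filter, Finset.mem_product, Finset.mem_range]
    constructor
    · exact fun h => h.2
    · intro h
      refine ⟨?_, h⟩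
      obtain ⟨a1, a2, a3, _⟩ := h
      omega
  have hN : ∀ l, Nlines dist f x n ε l = (F l).card := by
    intro l
    unfold Nlines
    rw [← Set.ncard_coe_finset]
    congr 1
    ext p
    simp only [Set.mem_ofPred_eq, Finset.mem_coe, hmem]
  have h0 : ∀ k, k ∉ Finset.range (n + 1) → Pline dist f x n ε (ℓ + k) = 0 := by
    intro k hk
    simp only [Finset.mem_range] at hk
    have : F (ℓ + k) = ∅ := by
      apply Finset.eq_empty_of_forall_notMem
      intro p hp
      rw [hmem] at hp
      obtain ⟨a1, a2, a3, _⟩ := hp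
      omega
    simp [Pline, hN, this]
  unfold PlineGe
  rw [tsum_eq_sum h0]
  unfold Pline
  rw [← Finset.sum_div]
  congr 1
  simp only [hN]
  rw [← Nat.cast_sum, ← Finset.card_sigma]
  congr 1
  refine Finset.card_bij (fun q _ => (q.2.1 + q.1, q.2.2 + q.1)) ?_ ?_ ?_
  · rintro ⟨k, i, j⟩ hq
    simp only [Finset.mem_sigma, hmem] at hq
    obtain ⟨_, a1, a2, a3, a4, a5, a6, a7⟩ := hq
    simp only [Finset.mem_filter, Finset.mem_product, Finset.mem_range]
    refine ⟨by omega, by omega, by omega, by omega, ?_, ?_⟩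
    · intro h hh
      have := a5 (k + h) (by omega)
      rwa [add_assoc, add_assoc]
    · intro hh
      have := a7 (by omega)
      rwa [show i + k + ℓ = i + (ℓ + k) by omega, show j + k + ℓ = j + (ℓ + k) by omega]
  · rintro ⟨k, i, j⟩ hq ⟨k', i', j'⟩ hq' he
    simp only [Finset.mem_sigma, hmem] at hq hq'
    simp only [Prod.mk.injEq] at he
    have e1 := RQA_inj _ f x n ε hq.2 hq'.2 (by omega) (by omega)
    have e2 := RQA_inj _ f x n ε hq'.2 hq.2 (by omega) (by omega)
    obtain rfl : i = i' := by omega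
    obtain rfl : k = k' := by omega
    obtain rfl : j = j' := by omega
    rfl
  · rintro ⟨a, b⟩ hp
    simp only [Finset.mem_filter, Finset.mem_product, Finset.mem_range] at hp
    obtain ⟨_, a1, a2, a3, a4, a5⟩ := hp
    obtain ⟨t, t1, t2, t3, t4⟩ := RQA_back (RPone dist f x ε) a b (by simpa using a4 0 (by omega))
    refine ⟨⟨t, a - t, b - t⟩, ?_, ?_⟩
    · simp only [Finset.mem_sigma, hmem, Finset.mem_range]
      refine ⟨by omega, by omega, by omega, by omega, by omega, ?_, ?_, ?_⟩
      · intro h hh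
        by_cases hc : h ≤ t
        · have := t3 (t - h) (by omega)
          rwa [show a - t + h = a - (t - h) by omega, show b - t + h = b - (t - h) by omega]
        · have := a4 (h - t) (by omega)
          rwa [show a - t + h = a + (h - t) by omega, show b - t + h = b + (h - t) by omega]
      · intro h h'
        exact t4 (by omega) (by omega)
      · intro h
        have := a5 (by omega)
        rwa [show a - t + (ℓ + t) = a + ℓ by omega, show b - t + (ℓ + t) = b + ℓ by omega]
    · simp only [Prod.mk.injEq]
      omega

open Classical in
theorem RQA_corr {X : Type*} [MetricSpace X] (f : X → X) (x : X)
    (ℓ n : ℕ) (ε : ℝ) (hε : 0 < ε) :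
    corrSum dist f x ℓ n ε - corrSum dist f x (ℓ + 1) n ε =
      (((Finset.range n ×ˢ Finset.range n).filter (fun p : ℕ × ℕ =>
        p.1 ≠ p.2 ∧ (∀ k, k < ℓ → RPone dist f x ε (p.1 + k) (p.2 + k)) ∧
        ¬ RPone dist f x ε (p.1 + ℓ) (p.2 + ℓ))).card : ℝ) / (n : ℝ) ^ 2 := by
  set G : ℕ → Finset (ℕ × ℕ) := fun l => (Finset.range n ×ˢ Finset.range n).filter
    (fun p : ℕ × ℕ => ∀ k, k < l → RPone dist f x ε (p.1 + k) (p.2 + k)) with hG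
  have hC : ∀ l, corrSum dist f x l n ε = ((G l).card : ℝ) / (n : ℝ) ^ 2 := by
    intro l
    unfold corrSum
    rw [← Set.ncard_coe_finset]
    congr 3
    ext p
    simp only [hG, Set.mem_ofPred_eq, Finset.mem_coe, Finset.mem_filter, Finset.mem_product,
      Finset.mem_range, and_assoc]
    rfl
  rw [hC, hC, ← sub_div]
  congr 1
  have hsub : G (ℓ + 1) ⊆ G ℓ := by
    intro p hp
    simp only [hG, Finset.mem_filter] at hp ⊢
    exact ⟨hp.1, fun k hk => hp.2 k (by omega)⟩
  rw [← Finset.cast_card_sdiff hsub]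
  congr 2
  ext p
  simp only [hG, Finset.mem_sdiff, Finset.mem_filter]
  constructor
  · rintro ⟨⟨h1, h2⟩, h3⟩
    have h4 : ¬ RPone dist f x ε (p.1 + ℓ) (p.2 + ℓ) := by
      intro h4
      apply h3
      refine ⟨h1, fun k hk => ?_⟩
      rcases Nat.lt_succ_iff_lt_or_eq.mp hk with h | rfl
      · exact h2 k h
      · exact h4
    refine ⟨h1, ?_, h2, h4⟩
    intro he
    apply h4
    simp [RPone, he, hε.le]
  · rintro ⟨h1, _, h2, h4⟩
    exact ⟨⟨h1, h2⟩, fun h => h4 (h.2 ℓ (by omega))⟩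


/-- Number of long lines via correlation sums:
P≥_ℓ(x,n,ε) = (n/(n−1))·[C_ℓ − C_{ℓ+1}] + δ with |δ| ≤ 2ℓ/n. -/
theorem PlineGe_eq_corrSum
    {X : Type*} [MetricSpace X] (f : X → X) (x : X)
    (ℓ n : ℕ) (hℓ : 1 ≤ ℓ) (hn : 2 ≤ n) (ε : ℝ) (hε : 0 < ε) :
    ∃ δ : ℝ, |δ| ≤ 2 * (ℓ : ℝ) / (n : ℝ) ∧
      PlineGe dist f x n ε ℓ =
        ((n : ℝ) / ((n : ℝ) - 1)) *
          (corrSum dist f x ℓ n ε - corrSum dist f x (ℓ + 1) n ε) + δ := by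
  classical
  rw [RQA_count f x ℓ n hℓ ε, RQA_corr f x ℓ n ε hε]
  set E := (Finset.range n ×ˢ Finset.range n).filter (fun p : ℕ × ℕ =>
        p.1 ≠ p.2 ∧ p.1 + ℓ ≤ n ∧ p.2 + ℓ ≤ n ∧ (∀ k, k < ℓ → RPone dist f x ε (p.1 + k) (p.2 + k)) ∧
        (max p.1 p.2 + ℓ < n → ¬ RPone dist f x ε (p.1 + ℓ) (p.2 + ℓ))) with hE
  set D := (Finset.range n ×ˢ Finset.range n).filter (fun p : ℕ × ℕ =>
        p.1 ≠ p.2 ∧ (∀ k, k < ℓ → RPone dist f x ε (p.1 + k) (p.2 + k)) ∧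
        ¬ RPone dist f x ε (p.1 + ℓ) (p.2 + ℓ)) with hD
  set S : Finset (ℕ × ℕ) := (Finset.range (n - 1) ×ˢ Finset.Ico (n - ℓ) n) ∪
    (Finset.Ico (n - ℓ) n ×ˢ Finset.range (n - 1)) with hS
  have hScard : S.card ≤ 2 * ℓ * (n - 1) := by
    refine (Finset.card_union_le _ _).trans ?_
    simp only [Finset.card_product, Finset.card_range, Nat.card_Ico]
    have h1 : n - (n - ℓ) ≤ ℓ := by omega
    have := Nat.mul_le_mul_left (n - 1) h1
    calc (n - 1) * (n - (n - ℓ)) + (n - (n - ℓ)) * (n - 1)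
        = 2 * ((n - 1) * (n - (n - ℓ))) := by ring
      _ ≤ 2 * ((n - 1) * ℓ) := by omega
      _ = 2 * ℓ * (n - 1) := by ring
  have hED : E \ D ⊆ S := by
    rintro ⟨a, b⟩ hp
    simp only [hE, hD, Finset.mem_sdiff, Finset.mem_filter, Finset.mem_product,
      Finset.mem_range] at hp
    obtain ⟨⟨h1, h2, h3, h4, h5, h6⟩, h7⟩ := hp
    have h8 : ¬ (max a b + ℓ < n) := fun h => h7 ⟨h1, h2, h5, h6 h⟩
    simp only [hS, Finset.mem_union, Finset.mem_product, Finset.mem_range, Finset.mem_Ico]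
    omega
  have hDE : D \ E ⊆ S := by
    rintro ⟨a, b⟩ hp
    simp only [hE, hD, Finset.mem_sdiff, Finset.mem_filter, Finset.mem_product,
      Finset.mem_range] at hp
    obtain ⟨⟨h1, h2, h5, h6⟩, h7⟩ := hp
    have h8 : ¬ (max a b + ℓ < n) :=
      fun h => h7 ⟨h1, h2, by omega, by omega, h5, fun _ => h6⟩
    simp only [hS, Finset.mem_union, Finset.mem_product, Finset.mem_range, Finset.mem_Ico]
    omega
  have c1 : E.card ≤ D.card + 2 * ℓ * (n - 1) := by
    have := Finset.card_le_card hED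
    have := Finset.le_card_sdiff D E
    omega
  have c2 : D.card ≤ E.card + 2 * ℓ * (n - 1) := by
    have := Finset.card_le_card hDE
    have := Finset.le_card_sdiff E D
    omega
  have hn1 : ((n - 1 : ℕ) : ℝ) = (n : ℝ) - 1 := by
    rw [Nat.cast_sub (by omega)]; simp
  have c1' : (E.card : ℝ) ≤ D.card + 2 * ℓ * ((n : ℝ) - 1) := by
    rw [← hn1]; exact_mod_cast c1
  have c2' : (D.card : ℝ) ≤ E.card + 2 * ℓ * ((n : ℝ) - 1) := by
    rw [← hn1]; exact_mod_cast c2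
  have hnR : (2 : ℝ) ≤ n := by exact_mod_cast hn
  have p1 : (0 : ℝ) < n := by linarith
  have p2 : (0 : ℝ) < (n : ℝ) - 1 := by linarith
  refine ⟨((E.card : ℝ) - D.card) / (n * ((n : ℝ) - 1)), ?_, ?_⟩
  · rw [abs_div, abs_of_pos (mul_pos p1 p2), div_le_div_iff₀ (mul_pos p1 p2) p1]
    have : |(E.card : ℝ) - D.card| ≤ 2 * ℓ * ((n : ℝ) - 1) := by
      rw [abs_le]; constructor <;> linarith
    calc _ ≤ 2 * ℓ * ((n : ℝ) - 1) * n := by gcongr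
      _ = _ := by ring
  · rw [show (n : ℝ) ^ 2 - n = n * ((n : ℝ) - 1) by ring]
    have := p1.ne'
    have := p2.ne'
    field_simp
    ring
end

section
/- Let (X,d) be a metric space, f : X → X a map, x ∈ X, ℓ ∈ ℕ, n ≥ 2 an integer and ε > 0. Then C_ℓ(x,n,ε) = ((n−1)/n)·[RR_ℓ(x,n,ε) − (ℓ−1)·P≥_ℓ(x,n,ε)] + δ for some real number δ with 1/n ≤ δ < 2ℓ/n. -/
open Filter Topology MeasureTheory

open RQA

namespace RQAaux

def S (R : ℕ → ℕ → Prop) (n l : ℕ) : Set (ℕ × ℕ) :=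
  {p | p.1 + l ≤ n ∧ p.2 + l ≤ n ∧ p.1 ≠ p.2 ∧ ∀ h, h < l → R (p.1 + h) (p.2 + h)}

def T (R : ℕ → ℕ → Prop) (n l : ℕ) : Set (ℕ × ℕ) :=
  {p | p ∈ S R n l ∧ (0 < p.1 → 0 < p.2 → ¬ R (p.1 - 1) (p.2 - 1))}

def L (R : ℕ → ℕ → Prop) (n l : ℕ) : Set (ℕ × ℕ) :=
  {p | p ∈ T R n l ∧ (max p.1 p.2 + l < n → ¬ R (p.1 + l) (p.2 + l))}

theorem box_finite (n : ℕ) : ((Finset.range (n + 1) ×ˢ Finset.range (n + 1) : Finset (ℕ × ℕ)) : Set (ℕ × ℕ)).Finite :=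
  Finset.finite_toSet _

theorem S_fin (R : ℕ → ℕ → Prop) (n l : ℕ) : (S R n l).Finite := by
  refine (box_finite n).subset ?_
  rintro ⟨i, j⟩ ⟨h1, h2, -⟩
  simp only [Finset.coe_product, Finset.coe_range, Set.mem_prod, Set.mem_Iio]
  simp only at h1 h2
  omega

theorem T_fin (R : ℕ → ℕ → Prop) (n l : ℕ) : (T R n l).Finite :=
  (S_fin R n l).subset fun _ h => h.1

theorem L_fin (R : ℕ → ℕ → Prop) (n l : ℕ) : (L R n l).Finite :=
  (T_fin R n l).subset fun _ h => h.1

theorem T_step (R : ℕ → ℕ → Prop) (n l : ℕ) :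
    (T R n l).ncard = (T R n (l + 1)).ncard + (L R n l).ncard := by
  rw [← Set.ncard_union_eq _ (T_fin _ _ _) (L_fin _ _ _)]
  · congr 1
    ext ⟨i, j⟩
    simp only [T, S, L, Set.mem_setOf_eq, Set.mem_union]
    constructor
    · rintro ⟨⟨h1, h2, h3, h4⟩, h5⟩
      by_cases h : max i j + l < n ∧ R (i + l) (j + l)
      · left
        refine ⟨⟨by omega, by omega, h3, ?_⟩, h5⟩
        intro k hk
        rcases Nat.lt_succ_iff_lt_or_eq.1 hk with hk | rfl
        · exact h4 k hk
        · exact h.2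
      · right
        exact ⟨⟨⟨h1, h2, h3, h4⟩, h5⟩, fun a b => h ⟨a, b⟩⟩
    · rintro (⟨⟨h1, h2, h3, h4⟩, h5⟩ | h)
      · exact ⟨⟨by omega, by omega, h3, fun k hk => h4 k (by omega)⟩, h5⟩
      · exact h.1
  · rw [Set.disjoint_left]
    rintro ⟨i, j⟩ ⟨⟨h1, h2, h3, h4⟩, h5⟩ ⟨-, h6⟩
    simp only at h1 h2 h4 h6
    exact h6 (by omega) (h4 l (by omega))

theorem S_step (R : ℕ → ℕ → Prop) (n l : ℕ) (hl : 1 ≤ l) :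
    (S R n l).ncard = (S R n (l + 1)).ncard + (T R n l).ncard := by
  have hinj : Function.Injective (fun p : ℕ × ℕ => (p.1 + 1, p.2 + 1)) := by
    rintro ⟨a, b⟩ ⟨c, e⟩ h
    simpa using h
  rw [← Set.ncard_image_of_injective (S R n (l + 1)) hinj,
    ← Set.ncard_union_eq _ ((S_fin _ _ _).image _) (T_fin _ _ _)]
  · congr 1
    ext ⟨i, j⟩
    simp only [T, S, Set.mem_setOf_eq, Set.mem_union, Set.mem_image, Prod.mk.injEq, Prod.exists]
    constructor
    · rintro ⟨h1, h2, h3, h4⟩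
      by_cases h : (0 < i ∧ 0 < j) ∧ R (i - 1) (j - 1)
      · left
        refine ⟨i - 1, j - 1, ⟨by omega, by omega, by omega, ?_⟩, by omega, by omega⟩
        intro k hk
        rcases k with _ | k
        · exact h.2
        · have := h4 k (by omega)
          rwa [show i - 1 + (k + 1) = i + k by omega, show j - 1 + (k + 1) = j + k by omega]
      · right
        exact ⟨⟨h1, h2, h3, h4⟩, fun a b c => h ⟨⟨a, b⟩, c⟩⟩
    · rintro (⟨a, b, ⟨h1, h2, h3, h4⟩, rfl, rfl⟩ | h)
      · refine ⟨by omega, by omega, by omega, fun k hk => ?_⟩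
        have := h4 (k + 1) (by omega)
        rwa [show a + 1 + k = a + (k + 1) by omega, show b + 1 + k = b + (k + 1) by omega]
      · exact h.1
  · rw [Set.disjoint_left]
    rintro _ ⟨⟨i, j⟩, ⟨h1, h2, h3, h4⟩, rfl⟩ ⟨-, h6⟩
    simp only at h1 h2 h4 h6
    exact h6 (by omega) (by omega) (h4 0 (by omega))

theorem S_empty (R : ℕ → ℕ → Prop) (n l : ℕ) (h : n + 1 ≤ l) : S R n l = ∅ := by
  ext ⟨i, j⟩
  simp only [S, Set.mem_setOf_eq, Set.mem_empty_iff_false, iff_false]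
  rintro ⟨h1, -⟩
  omega

theorem T_empty (R : ℕ → ℕ → Prop) (n l : ℕ) (h : n + 1 ≤ l) : T R n l = ∅ :=
  Set.subset_empty_iff.1 (S_empty R n l h ▸ fun _ h => h.1)

theorem L_empty (R : ℕ → ℕ → Prop) (n l : ℕ) (h : n + 1 ≤ l) : L R n l = ∅ :=
  Set.subset_empty_iff.1 (S_empty R n l h ▸ fun _ h => h.1.1)

theorem T_sum (R : ℕ → ℕ → Prop) (n m : ℕ) : ∀ l, n + 1 ≤ l + m →
    (T R n l).ncard = ∑ k ∈ Finset.range m, (L R n (l + k)).ncard := by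
  induction m with
  | zero => intro l h; simp [T_empty R n l h]
  | succ m ih =>
    intro l h
    rw [T_step, ih (l + 1) (by omega), Finset.sum_range_succ']
    simp only [Nat.add_zero]
    congr 1
    refine Finset.sum_congr rfl fun k _ => ?_
    rw [show l + 1 + k = l + (k + 1) by omega]

theorem S_sum (R : ℕ → ℕ → Prop) (n m : ℕ) : ∀ l, 1 ≤ l → n + 1 ≤ l + m →
    (S R n l).ncard = ∑ k ∈ Finset.range m, (k + 1) * (L R n (l + k)).ncard := by
  induction m with
  | zero => intro l _ h; simp [S_empty R n l h]
  | succ m ih =>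
    intro l h1 h
    rw [S_step _ _ _ h1, ih (l + 1) (by omega) (by omega), T_sum R n (m + 1) l h,
      Finset.sum_range_succ', Finset.sum_range_succ', ← add_assoc, ← Finset.sum_add_distrib]
    congr 1
    · refine Finset.sum_congr rfl fun k _ => ?_
      rw [show l + 1 + k = l + (k + 1) by omega]
      ring
    · simp

/-- The count of the correlation sum, up to boundary terms. -/
theorem count (R : ℕ → ℕ → Prop) (hR : ∀ i, R i i) (n l : ℕ) (hl : 1 ≤ l) :
    (S R n l).ncard + n ≤
        {p : ℕ × ℕ | p.1 < n ∧ p.2 < n ∧ ∀ k, k < l → R (p.1 + k) (p.2 + k)}.ncard ∧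
    {p : ℕ × ℕ | p.1 < n ∧ p.2 < n ∧ ∀ k, k < l → R (p.1 + k) (p.2 + k)}.ncard ≤
      (S R n l).ncard + n + 2 * ((l - 1) * n) := by
  set D : Set (ℕ × ℕ) := (fun i => (i, i)) '' (Finset.range n : Set ℕ) with hD
  have hDf : D.Finite := (Finset.finite_toSet _).image _
  have hDc : D.ncard = n := by
    rw [hD, Set.ncard_image_of_injective _ (fun a b h => by simpa using h), Set.ncard_coe_finset,
      Finset.card_range]
  have hdis : Disjoint (S R n l) D := by
    rw [Set.disjoint_left]
    rintro _ h ⟨i, -, rfl⟩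
    exact h.2.2.1 rfl
  have hu : (S R n l ∪ D).ncard = (S R n l).ncard + n := by
    rw [Set.ncard_union_eq hdis (S_fin _ _ _) hDf, hDc]
  rw [← hu]
  constructor
  · refine Set.ncard_le_ncard ?_ ((box_finite n).subset ?_)
    · rintro p (⟨h1, h2, h3, h4⟩ | ⟨i, hi, rfl⟩)
      · exact ⟨by omega, by omega, h4⟩
      · have : i < n := by simpa using hi
        exact ⟨this, this, fun k _ => hR _⟩
    · rintro ⟨i, j⟩ ⟨h1, h2, -⟩
      simp only [Finset.coe_product, Finset.coe_range, Set.mem_prod, Set.mem_Iio]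
      simp only at h1 h2
      omega
  · set E1 : Finset (ℕ × ℕ) := Finset.Ico (n - (l - 1)) n ×ˢ Finset.range n with hE1
    set E2 : Finset (ℕ × ℕ) := Finset.range n ×ˢ Finset.Ico (n - (l - 1)) n with hE2
    have hb : n - (n - (l - 1)) ≤ l - 1 := by omega
    have c1 : E1.card ≤ (l - 1) * n := by
      rw [hE1, Finset.card_product, Nat.card_Ico, Finset.card_range]
      exact Nat.mul_le_mul_right _ hb
    have c2 : E2.card ≤ (l - 1) * n := by
      rw [hE2, Finset.card_product, Nat.card_Ico, Finset.card_range, mul_comm]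
      exact Nat.mul_le_mul_right _ hb
    have hsub : {p : ℕ × ℕ | p.1 < n ∧ p.2 < n ∧ ∀ k, k < l → R (p.1 + k) (p.2 + k)} ⊆
        (S R n l ∪ D) ∪ ((E1 ∪ E2 : Finset (ℕ × ℕ)) : Set (ℕ × ℕ)) := by
      rintro ⟨i, j⟩ ⟨h1, h2, h3⟩
      simp only at h1 h2 h3
      by_cases hij : i = j
      · subst hij
        left; right
        exact ⟨i, by simpa using h1, rfl⟩
      by_cases hb : i + l ≤ n ∧ j + l ≤ n
      · left; left
        exact ⟨hb.1, hb.2, hij, h3⟩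
      · right
        simp only [hE1, hE2, Finset.mem_coe, Finset.mem_union, Finset.mem_product,
          Finset.mem_Ico, Finset.mem_range]
        omega
    have h1 := Set.ncard_le_ncard hsub
      (((S_fin _ _ _).union hDf).union (Finset.finite_toSet _))
    have h2 := Set.ncard_union_le (S R n l ∪ D) ((E1 ∪ E2 : Finset (ℕ × ℕ)) : Set (ℕ × ℕ))
    rw [Set.ncard_coe_finset] at h2
    have h3 := Finset.card_union_le E1 E2
    omega

end RQAaux

/-- Correlation sum via recurrence rate:
C_ℓ(x,n,ε) = ((n−1)/n)·[RR_ℓ − (ℓ−1)·P≥_ℓ] + δ with 1/n ≤ δ < 2ℓ/n. -/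
theorem corrSum_eq_RRate
    {X : Type*} [MetricSpace X] (f : X → X) (x : X)
    (ℓ n : ℕ) (hℓ : 1 ≤ ℓ) (hn : 2 ≤ n) (ε : ℝ) (hε : 0 < ε) :
    ∃ δ : ℝ, 1 / (n : ℝ) ≤ δ ∧ δ < 2 * (ℓ : ℝ) / (n : ℝ) ∧
      corrSum dist f x ℓ n ε =
        (((n : ℝ) - 1) / (n : ℝ)) *
          (RRate dist f x n ε ℓ - ((ℓ : ℝ) - 1) * PlineGe dist f x n ε ℓ) + δ := by
  set R : ℕ → ℕ → Prop := fun i j => dist (f^[i] x) (f^[j] x) ≤ ε with hRdef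
  obtain ⟨hlo, hhi⟩ := RQAaux.count R (fun i => by simp [hRdef, hε.le]) n ℓ hℓ
  set A := {p : ℕ × ℕ | p.1 < n ∧ p.2 < n ∧ ∀ k, k < ℓ → R (p.1 + k) (p.2 + k)}.ncard with hA
  have hC : corrSum dist f x ℓ n ε = (A : ℝ) / (n : ℝ) ^ 2 := rfl
  have hN : ∀ l, 1 ≤ l → Nlines dist f x n ε l = (RQAaux.L R n l).ncard := by
    intro l hl
    unfold Nlines
    congr 1
    ext ⟨i, j⟩
    simp only [IsLine, RPone, RQAaux.L, RQAaux.T, RQAaux.S, Set.mem_setOf_eq, hRdef]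
    tauto
  have hP : ∀ k, Pline dist f x n ε (ℓ + k) =
      ((RQAaux.L R n (ℓ + k)).ncard : ℝ) / ((n : ℝ) ^ 2 - n) := by
    intro k
    rw [Pline, hN _ (by omega)]
  have hP0 : ∀ k, k ∉ Finset.range (n + 1) → Pline dist f x n ε (ℓ + k) = 0 := by
    intro k hk
    rw [Finset.mem_range] at hk
    rw [hP, RQAaux.L_empty R n _ (by omega)]
    simp
  have hn0 : (2 : ℝ) ≤ n := by exact_mod_cast hn
  have hn1 : (n : ℝ) ≠ 0 := by linarith
  have hn2 : (n : ℝ) - 1 ≠ 0 := by linarith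
  have key : (((n : ℝ) - 1) / (n : ℝ)) *
      (RRate dist f x n ε ℓ - ((ℓ : ℝ) - 1) * PlineGe dist f x n ε ℓ) =
      ((RQAaux.S R n ℓ).ncard : ℝ) / (n : ℝ) ^ 2 := by
    rw [RRate, PlineGe, tsum_eq_sum hP0,
      tsum_eq_sum (s := Finset.range (n + 1)) (fun k hk => by rw [hP0 k hk, mul_zero]),
      RQAaux.S_sum R n (n + 1) ℓ hℓ (by omega), Finset.mul_sum, ← Finset.sum_sub_distrib,
      Finset.mul_sum]
    push_cast
    rw [Finset.sum_div]
    refine Finset.sum_congr rfl fun k _ => ?_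
    rw [hP, show (n : ℝ) ^ 2 - n = n * (n - 1) by ring]
    field_simp
    ring
  have hlo' : ((RQAaux.S R n ℓ).ncard : ℝ) + n ≤ A := by exact_mod_cast hlo
  have hhi' : (A : ℝ) ≤ (RQAaux.S R n ℓ).ncard + n + 2 * (((ℓ : ℝ) - 1) * n) := by
    have : (A : ℝ) ≤ (RQAaux.S R n ℓ).ncard + n + 2 * (((ℓ - 1 : ℕ) : ℝ) * n) := by
      exact_mod_cast hhi
    rwa [Nat.cast_sub hℓ, Nat.cast_one] at this
  refine ⟨((A : ℝ) - (RQAaux.S R n ℓ).ncard) / (n : ℝ) ^ 2, ?_, ?_, ?_⟩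
  · rw [div_le_div_iff₀ (by linarith) (by positivity)]
    nlinarith
  · rw [div_lt_div_iff₀ (by positivity) (by linarith)]
    nlinarith
  · rw [key, hC]
    ring
end
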